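/- Let d ≥ 1 and p_j, q_j ∈ [1,∞] for j = 0,1,2. Suppose there is a constant C > 0 such that ‖a#b‖_{ℳ^{p₀′,q₀′}} ≤ C ‖a‖_{ℳ^{p₁,q₁}} ‖b‖_{ℳ^{p₂,q₂}} for all Schwartz functions a, b on ℝ^{2d} (norms taking values in [0,∞]). Then 1 ≤ 1/p₀ + 1/p₁ + 1/p₂, and 1 ≤ 1/q_j + 1/q_k for all 0 ≤ j ≠ k ≤ 2. -/

import Mathlib

open MeasureTheory Filter
open scoped ENNReal RealInnerProductSpace BigOperators

noncomputable section

/-- The phase space `ℝ^d × ℝ^d ≃ ℝ^{2d}`. -/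
abbrev PhS (d : ℕ) : Type := EuclideanSpace ℝ (Fin d) × EuclideanSpace ℝ (Fin d)

/-- The symplectic form `σ((x,ξ),(y,η)) = ⟨y,ξ⟩ - ⟨x,η⟩`. -/
def symplForm {d : ℕ} (X Y : PhS d) : ℝ := ⟪Y.1, X.2⟫ - ⟪X.1, Y.2⟫

/-- The symplectic Fourier transform `(F_σ a)(X) = π^{-d} ∫ a(Y) e^{2iσ(X,Y)} dY`. -/
def symplFT (d : ℕ) (a : PhS d → ℂ) (X : PhS d) : ℂ :=
  ((Real.pi : ℂ) ^ d)⁻¹ * ∫ Y : PhS d, a Y * Complex.exp (2 * Complex.I * (symplForm X Y : ℂ))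

/-- The twisted convolution
`(a ∗_σ b)(X) = (2/π)^{d/2} ∫ a(X-Y) b(Y) e^{2iσ(X,Y)} dY`. -/
def twistConv (d : ℕ) (a b : PhS d → ℂ) (X : PhS d) : ℂ :=
  (((2 / Real.pi) ^ ((d : ℝ) / 2) : ℝ) : ℂ) *
    ∫ Y : PhS d, a (X - Y) * b Y * Complex.exp (2 * Complex.I * (symplForm X Y : ℂ))

/-- The Weyl product `a # b = (2π)^{-d/2} a ∗_σ (F_σ b)`. -/
def weylProd (d : ℕ) (a b : PhS d → ℂ) : PhS d → ℂ := fun X =>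
  (((2 * Real.pi) ^ (-(d : ℝ) / 2) : ℝ) : ℂ) * twistConv d a (symplFT d b) X

/-- The `N`-fold Weyl product `a₁ # ⋯ # a_N` of a list of symbols. -/
def weylProdList (d : ℕ) : List (PhS d → ℂ) → (PhS d → ℂ)
  | [] => fun _ => 0
  | [a] => a
  | a :: b :: l => weylProd d a (weylProdList d (b :: l))

/-- The symplectic short-time Fourier transform
`𝒱_Φ a (X,Y) = π^{-d} ∫ a(Z) conj(Φ(Z-X)) e^{2iσ(Y,Z)} dZ`. -/
def symplSTFT (d : ℕ) (Φ a : PhS d → ℂ) (X Y : PhS d) : ℂ :=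
  ((Real.pi : ℂ) ^ d)⁻¹ *
    ∫ Z : PhS d, a Z * (starRingEnd ℂ) (Φ (Z - X)) *
      Complex.exp (2 * Complex.I * (symplForm Y Z : ℂ))

/-- The `L^p` norm (with values in `[0,∞]`) of an `ℝ≥0∞`-valued function,
with the convention of an essential supremum when `p = ∞`. -/
def lpNormENN {α : Type*} [MeasurableSpace α] (μ : Measure α) (p : ℝ≥0∞)
    (f : α → ℝ≥0∞) : ℝ≥0∞ :=
  if p = ∞ then essSup f μ else (∫⁻ x, f x ^ p.toReal ∂μ) ^ (1 / p.toReal)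

/-- The modulation space norm `‖a‖_{ℳ^{p,q}_{(ω)}}` with respect to the window `Φ`. -/
def modNorm (d : ℕ) (p q : ℝ≥0∞) (ω : PhS d × PhS d → ℝ) (Φ a : PhS d → ℂ) : ℝ≥0∞ :=
  lpNormENN volume q fun Y =>
    lpNormENN volume p fun X => ENNReal.ofReal (‖symplSTFT d Φ a X Y‖ * ω (X, Y))

/-- The Wiener amalgam space norm `‖a‖_{𝒲^{p,q}_{(ω)}}` with respect to the window `Φ`. -/
def wienerNorm (d : ℕ) (p q : ℝ≥0∞) (ω : PhS d × PhS d → ℝ) (Φ a : PhS d → ℂ) : ℝ≥0∞ :=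
  lpNormENN volume p fun X =>
    lpNormENN volume q fun Y => ENNReal.ofReal (‖symplSTFT d Φ a X Y‖ * ω (X, Y))

/-- Membership in the class `𝒫_E` of positive, locally bounded, moderate weights. -/
def IsModerateWeight {E : Type*} [NormedAddCommGroup E] (ω : E → ℝ) : Prop :=
  (∀ x, 0 < ω x) ∧ (∀ r : ℝ, ∃ M : ℝ, ∀ x, ‖x‖ ≤ r → ω x ≤ M) ∧
    ∃ C c : ℝ, 0 < C ∧ 0 < c ∧ ∀ x y, ω (x + y) ≤ C * ω x * Real.exp (c * ‖y‖)

/-- The real number `1/p ∈ [0,1]` associated to `p ∈ [1,∞]`. -/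
def rcp (p : ℝ≥0∞) : ℝ := (p⁻¹).toReal

/-- The Hölder–Young exponent function `R_N(p) = (N-1)⁻¹ (Σ_{j=0}^N 1/p_j - 1)`. -/
def RN (N : ℕ) (p : Fin (N + 1) → ℝ≥0∞) : ℝ :=
  ((∑ j, rcp (p j)) - 1) / ((N : ℝ) - 1)

/-- The Weyl weight condition:
`1 ≲ ω₀(X_N+X₀, X_N-X₀) ∏_{j=1}^N ω_j(X_j+X_{j-1}, X_j-X_{j-1})`. -/
def WeylWeightCond (d N : ℕ) (ω : Fin (N + 1) → (PhS d × PhS d → ℝ)) : Prop :=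
  ∃ C : ℝ, 0 < C ∧ ∀ X : Fin (N + 1) → PhS d,
    1 ≤ C * ω 0 (X (Fin.last N) + X 0, X (Fin.last N) - X 0) *
      ∏ j : Fin N, ω j.succ (X j.succ + X j.castSucc, X j.succ - X j.castSucc)

end


open MeasureTheory Filter
open scoped ENNReal RealInnerProductSpace BigOperators
noncomputable section

lemma wl_rcp_top : rcp ∞ = 0 := by simp [rcp]

lemma wl_rcp_eq (p : ℝ≥0∞) : rcp p = 1 / p.toReal := by
  simp [rcp, ENNReal.toReal_inv]

lemma wl_lp_upper {α : Type*} [MeasurableSpace α] (μ : Measure α) (p : ℝ≥0∞) (hp : 1 ≤ p)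
    (f : α → ℝ≥0∞) (M A : ℝ≥0∞) (hM : M ≠ ∞) (h1 : ∀ x, f x ≤ M)
    (h2 : ∫⁻ x, f x ∂μ ≤ M * A) : lpNormENN μ p f ≤ M * A ^ rcp p := by
  unfold lpNormENN
  split_ifs with h
  · subst h
    rw [wl_rcp_top, ENNReal.rpow_zero, mul_one]
    exact essSup_le_of_ae_le _ (ae_of_all _ h1)
  · have hr : 1 ≤ p.toReal := by
      have := ENNReal.toReal_mono h hp
      simpa using this
    rw [wl_rcp_eq]
    set r := p.toReal
    have hM' : M ^ (r - 1) ≠ ∞ := ENNReal.rpow_ne_top_of_nonneg (by linarith) hM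
    have e1 : ∀ a : ℝ≥0∞, a ^ r = a * a ^ (r - 1) := by
      intro a
      have := ENNReal.rpow_add_of_nonneg (x := a) 1 (r - 1) (by norm_num) (by linarith)
      rw [ENNReal.rpow_one] at this
      rw [← this]; congr 1; ring
    have e2 : ∫⁻ x, f x ^ r ∂μ ≤ M ^ r * A := by
      calc ∫⁻ x, f x ^ r ∂μ ≤ ∫⁻ x, f x * M ^ (r - 1) ∂μ := by
            apply lintegral_mono
            intro x
            simp only
            rw [e1 (f x)]
            gcongr
            exact h1 x
        _ = (∫⁻ x, f x ∂μ) * M ^ (r - 1) := lintegral_mul_const' _ _ hM'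
        _ ≤ (M * A) * M ^ (r - 1) := by gcongr
        _ = M ^ r * A := by rw [e1 M]; ring
    calc (∫⁻ x, f x ^ r ∂μ) ^ (1 / r) ≤ (M ^ r * A) ^ (1 / r) := by gcongr
      _ = M * A ^ (1 / r) := by
        rw [ENNReal.mul_rpow_of_nonneg _ _ (by positivity), ← ENNReal.rpow_mul,
          mul_one_div_cancel (by positivity), ENNReal.rpow_one]

lemma wl_lp_lower {α : Type*} [MeasurableSpace α] (μ : Measure α) (p : ℝ≥0∞) (hp : 1 ≤ p)
    (f : α → ℝ≥0∞) (m : ℝ≥0∞) (E : Set α) (hE : MeasurableSet E) (hE0 : μ E ≠ 0)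
    (h1 : ∀ x ∈ E, m ≤ f x) : m * μ E ^ rcp p ≤ lpNormENN μ p f := by
  unfold lpNormENN
  split_ifs with h
  · subst h
    rw [wl_rcp_top, ENNReal.rpow_zero, mul_one]
    by_contra hlt
    push Not at hlt
    have := ae_lt_of_essSup_lt hlt
    apply hE0
    refine measure_mono_null ?_ (ae_iff.mp this)
    intro x hx
    simpa using h1 x hx
  · have hr : 1 ≤ p.toReal := by
      have := ENNReal.toReal_mono h hp
      simpa using this
    rw [wl_rcp_eq]
    set r := p.toReal
    have e2 : m ^ r * μ E ≤ ∫⁻ x, f x ^ r ∂μ := by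
      rw [← setLIntegral_const]
      refine le_trans (setLIntegral_mono' hE (g := fun x => f x ^ r) ?_) (setLIntegral_le_lintegral _ _)
      intro x hx
      exact ENNReal.rpow_le_rpow (h1 x hx) (by linarith)
    calc m * μ E ^ (1 / r) = (m ^ r * μ E) ^ (1 / r) := by
          rw [ENNReal.mul_rpow_of_nonneg _ _ (by positivity), ← ENNReal.rpow_mul,
            mul_one_div_cancel (by positivity), ENNReal.rpow_one]
      _ ≤ _ := by gcongr

lemma wl_exponent (c1 c2 : ℝ≥0∞) (h1 : c1 ≠ 0) (h2 : c2 ≠ ∞) (s t : ℝ)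
    (h : ∀ N : ℕ, 1 ≤ N → c1 * (N : ℝ≥0∞) ^ s ≤ c2 * (N : ℝ≥0∞) ^ t) : s ≤ t := by
  by_contra hst
  push Not at hst
  have hpos : 0 < s - t := by linarith
  set K := (c2 / c1) ^ ((s - t)⁻¹) with hK
  have hKt : K ≠ ∞ := ENNReal.rpow_ne_top_of_nonneg (by positivity) (ENNReal.div_ne_top h2 h1)
  obtain ⟨N, hN⟩ := ENNReal.exists_nat_gt hKt
  have hN1 : 1 ≤ N := by
    rcases Nat.eq_zero_or_pos N with h0 | h0
    · subst h0; simp at hN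
    · exact h0
  have hN0 : (N : ℝ≥0∞) ≠ 0 := by
    have : N ≠ 0 := by omega
    exact_mod_cast this
  have hNt : (N : ℝ≥0∞) ≠ ∞ := ENNReal.natCast_ne_top N
  have hh := h N hN1
  have e : (N : ℝ≥0∞) ^ s = (N : ℝ≥0∞) ^ (s - t) * (N : ℝ≥0∞) ^ t := by
    rw [← ENNReal.rpow_add _ _ hN0 hNt]; congr 1; ring
  rw [e, ← mul_assoc] at hh
  have hh2 : c1 * (N : ℝ≥0∞) ^ (s - t) ≤ c2 := by
    rwa [ENNReal.mul_le_mul_iff_left (ENNReal.rpow_pos (pos_iff_ne_zero.mpr hN0) hNt).ne'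
      (ENNReal.rpow_ne_top_of_ne_zero hN0 hNt)] at hh
  have hh3 : (N : ℝ≥0∞) ^ (s - t) ≤ c2 / c1 := by
    rw [ENNReal.le_div_iff_mul_le (Or.inl h1) (Or.inr h2), mul_comm]; exact hh2
  have hh4 : (N : ℝ≥0∞) ≤ K := by
    rw [hK, ENNReal.le_rpow_inv_iff hpos]; exact hh3
  exact absurd hN (not_lt.mpr hh4)
end

open MeasureTheory Filter
open scoped ENNReal RealInnerProductSpace BigOperators
noncomputable section

instance wl_haar (d : ℕ) : (volume : Measure (PhS d)).IsAddHaarMeasure := by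
  show (Measure.prod volume volume).IsAddHaarMeasure
  infer_instance

/-- polynomial decay weight -/
def wG (d : ℕ) (X : PhS d) : ℝ := ((1 + ‖X‖) ^ (2 * d + 1))⁻¹

lemma wG_pos (d : ℕ) (X : PhS d) : 0 < wG d X := by unfold wG; positivity

lemma wG_le_one (d : ℕ) (X : PhS d) : wG d X ≤ 1 := by
  unfold wG
  apply inv_le_one_of_one_le₀
  apply one_le_pow₀
  linarith [norm_nonneg X]

lemma wG_le (d : ℕ) (X : PhS d) (r : ℝ) (hr : 0 ≤ r) (h : r ≤ ‖X‖) : wG d X ≤ (1 + r)⁻¹ := by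
  unfold wG
  apply inv_anti₀ (by positivity)
  calc 1 + r ≤ 1 + ‖X‖ := by linarith
    _ ≤ (1 + ‖X‖) ^ (2 * d + 1) := le_self_pow₀ (by linarith [norm_nonneg X]) (by omega)

lemma wG_cont (d : ℕ) : Continuous (wG d) := by
  unfold wG
  refine Continuous.inv₀ (by fun_prop) (fun X => by positivity)

lemma wG_integrable (d : ℕ) : Integrable (wG d) := by
  have h := integrable_one_add_norm (E := PhS d) (μ := volume) (r := (2 * d + 1 : ℕ))
    (by simp; linarith)
  refine h.congr (ae_of_all _ fun X => ?_)
  simp only [wG]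
  rw [Real.rpow_neg (by positivity), Real.rpow_natCast]

lemma wl_schw_bd {d : ℕ} (f : SchwartzMap (PhS d) ℂ) (k n : ℕ) :
    ∃ C : ℝ, 0 ≤ C ∧ ∀ x, (1 + ‖x‖) ^ k * ‖iteratedFDeriv ℝ n f x‖ ≤ C :=
  ⟨_, le_trans (by positivity)
    (SchwartzMap.one_add_le_sup_seminorm_apply (𝕜 := ℝ) (m := (k, n)) le_rfl le_rfl f 0),
    fun x => SchwartzMap.one_add_le_sup_seminorm_apply (𝕜 := ℝ) (m := (k, n)) le_rfl le_rfl f x⟩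

lemma wl_schw_bd0 {d : ℕ} (f : SchwartzMap (PhS d) ℂ) (k : ℕ) :
    ∃ C : ℝ, 0 ≤ C ∧ ∀ x, (1 + ‖x‖) ^ k * ‖f x‖ ≤ C := by
  simpa using wl_schw_bd f k 0

/-- conjugated shifted window as a Schwartz function -/
def wConj {d : ℕ} (Φ : SchwartzMap (PhS d) ℂ) (X : PhS d) : SchwartzMap (PhS d) ℂ :=
  SchwartzMap.compSubConstCLM ℝ X (SchwartzMap.postcompCLM (𝕜 := ℝ) (Complex.conjCLE : ℂ →L[ℝ] ℂ) Φ)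

lemma wConj_apply {d : ℕ} (Φ : SchwartzMap (PhS d) ℂ) (X Z : PhS d) :
    wConj Φ X Z = (starRingEnd ℂ) (Φ (Z - X)) := by
  simp [wConj]

lemma wConj_bd {d : ℕ} (Φ : SchwartzMap (PhS d) ℂ) (n : ℕ) :
    ∃ C : ℝ, 0 ≤ C ∧ ∀ X Z, ‖iteratedFDeriv ℝ n (wConj Φ X) Z‖ ≤ C := by
  obtain ⟨C, hC, h⟩ := wl_schw_bd (wConj Φ 0) 0 n
  refine ⟨C, hC, fun X Z => ?_⟩
  have e : (wConj Φ X : PhS d → ℂ) = fun Z => wConj Φ 0 (Z - X) := by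
    funext Z; simp [wConj_apply]
  rw [e, iteratedFDeriv_comp_sub]
  simpa using h (Z - X)

/-- product -/
def wProd {d : ℕ} (Φ a : SchwartzMap (PhS d) ℂ) (X : PhS d) : SchwartzMap (PhS d) ℂ :=
  SchwartzMap.pairing (ContinuousLinearMap.mul ℝ ℂ) a (wConj Φ X)

lemma wProd_apply {d : ℕ} (Φ a : SchwartzMap (PhS d) ℂ) (X Z : PhS d) :
    wProd Φ a X Z = a Z * (starRingEnd ℂ) (Φ (Z - X)) := by
  simp [wProd, wConj_apply]

lemma wProd_bd {d : ℕ} (Φ a : SchwartzMap (PhS d) ℂ) (n : ℕ) :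
    ∃ C : ℝ, 0 ≤ C ∧ ∀ X, ∫ Z, ‖iteratedFDeriv ℝ n (wProd Φ a X) Z‖ ≤ C := by
  choose B hB0 hB using fun i => wConj_bd Φ i
  have hint : ∀ i, Integrable (fun Z => ‖iteratedFDeriv ℝ i a Z‖) := fun i => by
    simpa using a.integrable_pow_mul_iteratedFDeriv volume 0 i
  refine ⟨∑ i ∈ Finset.range (n + 1), (n.choose i : ℝ) * (∫ Z, ‖iteratedFDeriv ℝ i a Z‖) *
    B (n - i), ?_, fun X => ?_⟩
  · apply Finset.sum_nonneg
    intro i _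
    have : 0 ≤ ∫ Z, ‖iteratedFDeriv ℝ i a Z‖ := integral_nonneg fun Z => norm_nonneg _
    have := hB0 (n - i)
    positivity
  · have hb : ∀ Z, ‖iteratedFDeriv ℝ n (wProd Φ a X) Z‖ ≤
        ∑ i ∈ Finset.range (n + 1), (n.choose i : ℝ) * ‖iteratedFDeriv ℝ i a Z‖ * B (n - i) := by
      intro Z
      have e : (wProd Φ a X : PhS d → ℂ) = fun Z => a Z * wConj Φ X Z := by
        funext Z; simp [wProd_apply, wConj_apply]
      rw [e]
      refine (norm_iteratedFDeriv_mul_le (a.smooth ⊤) ((wConj Φ X).smooth ⊤) Z (n := n)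
        (by exact_mod_cast le_top)).trans ?_
      apply Finset.sum_le_sum
      intro i _
      gcongr
      exact hB _ _ _
    have hI : ∀ i ∈ Finset.range (n + 1), Integrable (fun Z =>
        (n.choose i : ℝ) * ‖iteratedFDeriv ℝ i a Z‖ * B (n - i)) := fun i _ =>
      ((hint i).const_mul _).mul_const _
    calc _ ≤ ∫ Z, ∑ i ∈ Finset.range (n + 1),
            (n.choose i : ℝ) * ‖iteratedFDeriv ℝ i a Z‖ * B (n - i) := by
          apply integral_mono _ (integrable_finsetSum _ hI) hb
          simpa using (wProd Φ a X).integrable_pow_mul_iteratedFDeriv volume 0 n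
      _ = _ := by
          rw [integral_finsetSum _ hI]
          apply Finset.sum_congr rfl
          intro i _
          rw [integral_mul_const, integral_const_mul]

/-- bilinear form -/
def wL (d : ℕ) : PhS d →L[ℝ] PhS d →L[ℝ] ℝ :=
  Real.pi⁻¹ • ((innerSL ℝ).bilinearComp (ContinuousLinearMap.snd ℝ _ _)
      (ContinuousLinearMap.fst ℝ _ _) -
    (innerSL ℝ).bilinearComp (ContinuousLinearMap.fst ℝ _ _) (ContinuousLinearMap.snd ℝ _ _))

lemma wL_apply {d : ℕ} (v w : PhS d) : wL d v w = Real.pi⁻¹ * symplForm v w := by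
  simp [wL, symplForm, real_inner_comm]

lemma symplForm_swap {d : ℕ} (v w : PhS d) : symplForm v w = - symplForm w v := by
  simp only [symplForm]
  ring

lemma symplSTFT_eq_fourier {d : ℕ} (Φ a : SchwartzMap (PhS d) ℂ) (X Y : PhS d) :
    symplSTFT d Φ a X Y = ((Real.pi : ℂ) ^ d)⁻¹ *
      VectorFourier.fourierIntegral Real.fourierChar volume (wL d).toLinearMap₁₂ (wProd Φ a X) Y := by
  unfold symplSTFT VectorFourier.fourierIntegral
  congr 1
  apply integral_congr_ae
  refine ae_of_all _ fun Z => ?_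
  simp only [wProd_apply]
  rw [Circle.smul_def, Real.fourierChar_apply, smul_eq_mul, mul_comm]
  congr 2
  have : (wL d).toLinearMap₁₂ Z Y = Real.pi⁻¹ * symplForm Z Y := wL_apply Z Y
  rw [this, symplForm_swap Z Y]
  push_cast
  have : (Real.pi : ℂ) ≠ 0 := by exact_mod_cast Real.pi_ne_zero
  field_simp

lemma wl_decayY_aux {d : ℕ} (Φ a : SchwartzMap (PhS d) ℂ) (n : ℕ) :
    ∃ C : ℝ, 0 ≤ C ∧ ∀ X Y, ‖Y‖ ^ n * ‖symplSTFT d Φ a X Y‖ ≤ C := by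
  choose B hB0 hB using fun i => wProd_bd Φ a i
  set K : ℝ := (2 * ((0:ℕ):ℝ) + 2) ^ n * ∑ i ∈ Finset.range (n + 1), B i with hK
  have hK0 : 0 ≤ K := by
    have : 0 ≤ ∑ i ∈ Finset.range (n + 1), B i := Finset.sum_nonneg fun i _ => hB0 i
    positivity
  refine ⟨(Real.pi ^ d)⁻¹ * (Real.pi ^ n * K) , by positivity, fun X Y => ?_⟩
  rw [symplSTFT_eq_fourier, norm_mul]
  set F := VectorFourier.fourierIntegral Real.fourierChar volume (wL d).toLinearMap₁₂ (wProd Φ a X) Y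
  have e1 : ‖((Real.pi : ℂ) ^ d)⁻¹‖ = (Real.pi ^ d)⁻¹ := by
    rw [norm_inv, norm_pow, Complex.norm_real, Real.norm_of_nonneg Real.pi_pos.le]
  rw [e1]
  have key : ‖Y‖ ^ n * ‖F‖ ≤ Real.pi ^ n * K := by
    have h := VectorFourier.pow_mul_norm_iteratedFDeriv_fourierIntegral_le (wL d)
      (f := wProd Φ a X) (μ := volume) (K := ⊤) (N := ⊤) ((wProd Φ a X).smooth ⊤)
      (fun k n _ _ => (wProd Φ a X).integrable_pow_mul_iteratedFDeriv volume k n)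
      (k := 0) (n := n) le_top le_top ((Y.2, -Y.1) : PhS d) Y
    rw [norm_iteratedFDeriv_zero] at h
    change _ * ‖F‖ ≤ _ at h
    have hs : ∑ p ∈ Finset.range (0 + 1) ×ˢ Finset.range (n + 1),
        ∫ v, ‖v‖ ^ p.1 * ‖iteratedFDeriv ℝ p.2 (wProd Φ a X) v‖ ≤
        ∑ i ∈ Finset.range (n + 1), B i := by
      rw [Finset.sum_product]
      simp only [zero_add, Finset.range_one, Finset.sum_singleton, pow_zero, one_mul]
      exact Finset.sum_le_sum fun i _ => hB i X
    have hv : ‖((Y.2, -Y.1) : PhS d)‖ = ‖Y‖ := by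
      rw [Prod.norm_def, Prod.norm_def]; simp [max_comm]
    have hLv : |wL d ((Y.2, -Y.1) : PhS d) Y| = Real.pi⁻¹ * (‖Y.1‖ ^ 2 + ‖Y.2‖ ^ 2) := by
      rw [wL_apply, abs_mul, abs_of_pos (inv_pos.mpr Real.pi_pos)]
      congr 1
      simp only [symplForm, inner_neg_right, real_inner_self_eq_norm_sq]
      rw [abs_of_nonpos (by nlinarith [sq_nonneg ‖Y.1‖, sq_nonneg ‖Y.2‖])]
      ring
    have hge : Real.pi⁻¹ * ‖Y‖ ^ 2 ≤ |wL d ((Y.2, -Y.1) : PhS d) Y| := by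
      rw [hLv]
      gcongr
      rw [Prod.norm_def]
      rcases max_cases ‖Y.1‖ ‖Y.2‖ with ⟨h, _⟩ | ⟨h, _⟩ <;> rw [h] <;>
        nlinarith [sq_nonneg ‖Y.1‖, sq_nonneg ‖Y.2‖]
    rw [hv] at h
    have h2 : (Real.pi⁻¹ * ‖Y‖ ^ 2) ^ n * ‖F‖ ≤ ‖Y‖ ^ n * K := by
      calc (Real.pi⁻¹ * ‖Y‖ ^ 2) ^ n * ‖F‖ ≤ |wL d ((Y.2, -Y.1) : PhS d) Y| ^ n * ‖F‖ := by
            gcongr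
        _ ≤ _ := h
        _ ≤ ‖Y‖ ^ n * K := by
            rw [hK, pow_zero, mul_one, mul_assoc]
            gcongr
    have h3 : ‖Y‖ ^ n * (‖Y‖ ^ n * ‖F‖) ≤ ‖Y‖ ^ n * (Real.pi ^ n * K) := by
      have : ‖Y‖ ^ n * (‖Y‖ ^ n * ‖F‖) = Real.pi ^ n * ((Real.pi⁻¹ * ‖Y‖ ^ 2) ^ n * ‖F‖) := by
        rw [mul_pow, inv_pow]
        have : Real.pi ^ n ≠ 0 := by positivity
        field_simp
        ring
      rw [this]
      calc _ ≤ Real.pi ^ n * (‖Y‖ ^ n * K) := by gcongr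
        _ = _ := by ring
    rcases (norm_nonneg Y).eq_or_lt with h0 | h0
    · rcases Nat.eq_zero_or_pos n with hn | hn
      · subst hn; simpa using h3
      · rw [← h0, zero_pow hn.ne', zero_mul]; positivity
    · exact le_of_mul_le_mul_left h3 (by positivity)
  calc ‖Y‖ ^ n * ((Real.pi ^ d)⁻¹ * ‖F‖) = (Real.pi ^ d)⁻¹ * (‖Y‖ ^ n * ‖F‖) := by ring
    _ ≤ _ := by gcongr

lemma wl_decayY {d : ℕ} (Φ a : SchwartzMap (PhS d) ℂ) (n : ℕ) :
    ∃ C : ℝ, 0 ≤ C ∧ ∀ X Y, (1 + ‖Y‖) ^ n * ‖symplSTFT d Φ a X Y‖ ≤ C := by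
  obtain ⟨C0, h0, H0⟩ := wl_decayY_aux Φ a 0
  obtain ⟨C1, h1, H1⟩ := wl_decayY_aux Φ a n
  refine ⟨2 ^ (n - 1) * (C0 + C1), by positivity, fun X Y => ?_⟩
  have h := add_pow_le (zero_le_one' ℝ) (norm_nonneg Y) n
  have a0 := H0 X Y
  have a1 := H1 X Y
  rw [pow_zero, one_mul] at a0
  calc (1 + ‖Y‖) ^ n * ‖symplSTFT d Φ a X Y‖
      ≤ (2 ^ (n - 1) * (1 ^ n + ‖Y‖ ^ n)) * ‖symplSTFT d Φ a X Y‖ := by gcongr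
    _ = 2 ^ (n - 1) * (‖symplSTFT d Φ a X Y‖ + ‖Y‖ ^ n * ‖symplSTFT d Φ a X Y‖) := by
        rw [one_pow]; ring
    _ ≤ _ := by gcongr

lemma wl_norm_phase (x : ℝ) : ‖Complex.exp (2 * Complex.I * (x : ℂ))‖ = 1 := by
  have : 2 * Complex.I * (x : ℂ) = ((2 * x : ℝ) : ℂ) * Complex.I := by push_cast; ring
  rw [this, Complex.norm_exp_ofReal_mul_I]

lemma wl_norm_pi (d : ℕ) : ‖((Real.pi : ℂ) ^ d)⁻¹‖ = (Real.pi ^ d)⁻¹ := by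
  rw [norm_inv, norm_pow, Complex.norm_real, Real.norm_of_nonneg Real.pi_pos.le]

lemma wl_decayX {d : ℕ} (Φ a : SchwartzMap (PhS d) ℂ) (n : ℕ) :
    ∃ C : ℝ, 0 ≤ C ∧ ∀ X Y, (1 + ‖X‖) ^ n * ‖symplSTFT d Φ a X Y‖ ≤ C := by
  obtain ⟨C0, h0, H0⟩ := wl_schw_bd0 Φ n
  obtain ⟨C1, h1, H1⟩ := wl_schw_bd0 a (n + (2 * d + 1))
  have hI : 0 ≤ ∫ Z, wG d Z := integral_nonneg fun Z => (wG_pos d Z).le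
  refine ⟨(Real.pi ^ d)⁻¹ * (C0 * C1 * ∫ Z, wG d Z), by positivity, fun X Y => ?_⟩
  have key : ∀ Z, (1 + ‖X‖) ^ n * ‖a Z * (starRingEnd ℂ) (Φ (Z - X)) *
      Complex.exp (2 * Complex.I * (symplForm Y Z : ℂ))‖ ≤ C0 * C1 * wG d Z := by
    intro Z
    rw [norm_mul, norm_mul, wl_norm_phase, mul_one, RCLike.norm_conj]
    have t : (1 + ‖X‖) ≤ (1 + ‖Z‖) * (1 + ‖Z - X‖) := by
      have : ‖X‖ ≤ ‖Z‖ + ‖Z - X‖ := by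
        have := norm_sub_le Z (Z - X)
        simpa using this
      nlinarith [norm_nonneg Z, norm_nonneg (Z - X), mul_nonneg (norm_nonneg Z) (norm_nonneg (Z - X))]
    have t2 : (1 + ‖Z‖) ^ n * ‖a Z‖ ≤ C1 * wG d Z := by
      have := H1 Z
      rw [pow_add] at this
      unfold wG
      rw [← div_eq_mul_inv, le_div_iff₀ (by positivity)]
      linarith
    calc (1 + ‖X‖) ^ n * (‖a Z‖ * ‖Φ (Z - X)‖)
        ≤ ((1 + ‖Z‖) * (1 + ‖Z - X‖)) ^ n * (‖a Z‖ * ‖Φ (Z - X)‖) := by gcongr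
      _ = ((1 + ‖Z - X‖) ^ n * ‖Φ (Z - X)‖) * ((1 + ‖Z‖) ^ n * ‖a Z‖) := by rw [mul_pow]; ring
      _ ≤ C0 * (C1 * wG d Z) := by
          gcongr
          exact H0 _
      _ = _ := by ring
  unfold symplSTFT
  rw [norm_mul, wl_norm_pi]
  set f := fun Z => a Z * (starRingEnd ℂ) (Φ (Z - X)) *
      Complex.exp (2 * Complex.I * (symplForm Y Z : ℂ))
  have : ‖(1 + ‖X‖) ^ n • ∫ Z, f Z‖ ≤ ∫ Z, C0 * C1 * wG d Z := by
    rw [← integral_smul]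
    apply norm_integral_le_of_norm_le ((wG_integrable d).const_mul _)
    refine ae_of_all _ fun Z => ?_
    rw [norm_smul, Real.norm_of_nonneg (by positivity)]
    exact key Z
  rw [norm_smul, Real.norm_of_nonneg (by positivity), integral_const_mul] at this
  calc _ = (Real.pi ^ d)⁻¹ * ((1 + ‖X‖) ^ n * ‖∫ Z, f Z‖) := by ring
    _ ≤ _ := by gcongr

lemma wl_decay {d : ℕ} (Φ a : SchwartzMap (PhS d) ℂ) :
    ∃ C : ℝ, 0 < C ∧ ∀ X Y, ‖symplSTFT d Φ a X Y‖ ≤ C * (wG d X * wG d Y) := by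
  obtain ⟨C0, h0, H0⟩ := wl_decayX Φ a ((2 * d + 1) + (2 * d + 1))
  obtain ⟨C1, h1, H1⟩ := wl_decayY Φ a ((2 * d + 1) + (2 * d + 1))
  refine ⟨C0 + C1 + 1, by positivity, fun X Y => ?_⟩
  have a0 := H0 X Y
  have a1 := H1 X Y
  set v := ‖symplSTFT d Φ a X Y‖
  have hv : 0 ≤ v := norm_nonneg _
  unfold wG
  rw [← mul_inv, ← div_eq_mul_inv, le_div_iff₀ (by positivity)]
  set x := (1 + ‖X‖) ^ (2 * d + 1)
  set y := (1 + ‖Y‖) ^ (2 * d + 1)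
  rw [pow_add] at a0 a1
  change x * x * v ≤ C0 at a0
  change y * y * v ≤ C1 at a1
  nlinarith [mul_nonneg hv (sq_nonneg (x - y))]
end

open MeasureTheory Filter
open scoped ENNReal RealInnerProductSpace BigOperators
noncomputable section

lemma wl_exp_iter (n : ℕ) (z : ℂ) : ‖iteratedFDeriv ℝ n Complex.exp z‖ ≤ ‖Complex.exp z‖ := by
  induction n with
  | zero => simp
  | succ n ih =>
    have e : fderiv ℝ Complex.exp = (ContinuousLinearMap.mul ℝ ℂ) ∘ Complex.exp := by
      funext w
      have h := (Complex.hasDerivAt_exp w).hasFDerivAt.restrictScalars ℝ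
      rw [h.fderiv]
      ext u <;> simp [mul_comm]
    rw [← norm_iteratedFDeriv_fderiv, e]
    refine (ContinuousLinearMap.norm_iteratedFDeriv_comp_left _
      (N := n) (Complex.contDiff_exp.contDiffAt) le_rfl).trans ?_
    calc _ ≤ 1 * ‖Complex.exp z‖ := by
          gcongr
          exact ContinuousLinearMap.opNorm_mul_le ℝ ℂ
      _ = _ := one_mul _

/-- exponential Schwartz functions -/
def wExpS {d : ℕ} (h : PhS d → ℂ) (hh : h.HasTemperateGrowth)
    (hb : ∀ k : ℕ, ∃ C, ∀ x, (1 + ‖x‖) ^ k * ‖Complex.exp (h x)‖ ≤ C) :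
    SchwartzMap (PhS d) ℂ where
  toFun := Complex.exp ∘ h
  smooth' := Complex.contDiff_exp.comp hh.1
  decay' := by
    intro m n
    obtain ⟨k, C, hC, H⟩ := hh.norm_iteratedFDeriv_le_uniform n
    obtain ⟨C', H'⟩ := hb (m + k * n)
    refine ⟨n.factorial * (1 + C) ^ n * C', fun x => ?_⟩
    have h1 := norm_iteratedFDeriv_comp_le (𝕜 := ℝ) (g := Complex.exp) (f := h) (n := n) (N := n)
      (D := (1 + C) * (1 + ‖x‖) ^ k)
      Complex.contDiff_exp (hh.1.of_le (by exact_mod_cast le_top)) le_rfl x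
      (fun i _ => wl_exp_iter i (h x)) (fun i hi hin => by
        have h2 := H i hin x
        have h3 : (1:ℝ) ≤ (1 + ‖x‖) ^ k := one_le_pow₀ (by linarith [norm_nonneg x])
        calc _ ≤ C * (1 + ‖x‖) ^ k := h2
          _ ≤ (1 + C) * (1 + ‖x‖) ^ k := by gcongr; linarith
          _ ≤ _ := le_self_pow₀ (by nlinarith) (by omega))
    calc ‖x‖ ^ m * ‖iteratedFDeriv ℝ n (Complex.exp ∘ h) x‖
        ≤ (1 + ‖x‖) ^ m * (n.factorial * ‖Complex.exp (h x)‖ * ((1 + C) * (1 + ‖x‖) ^ k) ^ n) := by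
          gcongr
          linarith
      _ = n.factorial * (1 + C) ^ n * ((1 + ‖x‖) ^ (m + k * n) * ‖Complex.exp (h x)‖) := by
          rw [mul_pow, pow_add, pow_mul]; ring
      _ ≤ _ := by gcongr; exact H' x

/-- squared euclidean norm -/
def wQ {d : ℕ} (X : PhS d) : ℝ := ‖X.1‖ ^ 2 + ‖X.2‖ ^ 2

lemma wQ_ge {d : ℕ} (X : PhS d) : ‖X‖ ^ 2 ≤ wQ X := by
  unfold wQ
  rw [Prod.norm_def]
  rcases max_cases ‖X.1‖ ‖X.2‖ with ⟨h, _⟩ | ⟨h, _⟩ <;> rw [h] <;>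
    nlinarith [sq_nonneg ‖X.1‖, sq_nonneg ‖X.2‖]

lemma wQ_tg {d : ℕ} : (wQ : PhS d → ℝ).HasTemperateGrowth := by
  unfold wQ
  apply Function.HasTemperateGrowth.add
  · exact Function.HasTemperateGrowth.comp (Function.hasTemperateGrowth_norm_sq (H := EuclideanSpace ℝ (Fin d))) (ContinuousLinearMap.hasTemperateGrowth
      (ContinuousLinearMap.fst ℝ (EuclideanSpace ℝ (Fin d)) (EuclideanSpace ℝ (Fin d))))
  · exact Function.HasTemperateGrowth.comp (Function.hasTemperateGrowth_norm_sq (H := EuclideanSpace ℝ (Fin d))) (ContinuousLinearMap.hasTemperateGrowth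
      (ContinuousLinearMap.snd ℝ (EuclideanSpace ℝ (Fin d)) (EuclideanSpace ℝ (Fin d))))

/-- basic exponential -/
def wE (s q : ℝ) : ℂ := Complex.exp (2 * Complex.I * (s : ℂ) - (q : ℂ))

lemma wE_mul (s q s' q' : ℝ) : wE s q * wE s' q' = wE (s + s') (q + q') := by
  unfold wE; rw [← Complex.exp_add]; congr 1; push_cast; ring

lemma wE_norm (s q : ℝ) : ‖wE s q‖ = Real.exp (-q) := by
  unfold wE; rw [Complex.norm_exp]; simp

lemma wE_phase (s : ℝ) : Complex.exp (2 * Complex.I * (s : ℂ)) = wE s 0 := by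
  unfold wE; simp

lemma wl_poly_exp (k : ℕ) (r : ℝ) (hr : 0 ≤ r) :
    (1 + r) ^ k ≤ (2 * ((k : ℝ) + 1)) ^ (k + 1) * Real.exp (r ^ 2) := by
  have hk : (0 : ℝ) < (k : ℝ) + 1 := by positivity
  have h1 : 1 + r ≤ 2 * ((k : ℝ) + 1) * Real.exp (r ^ 2 / ((k : ℝ) + 1)) := by
    have h2 := Real.add_one_le_exp (r ^ 2 / ((k : ℝ) + 1))
    have h3 : 1 + r ≤ 2 * ((k : ℝ) + 1) * (r ^ 2 / ((k : ℝ) + 1) + 1) := by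
      have : 2 * ((k : ℝ) + 1) * (r ^ 2 / ((k : ℝ) + 1) + 1) = 2 * r ^ 2 + 2 * ((k : ℝ) + 1) := by
        field_simp
      rw [this]
      have : (0 : ℝ) ≤ k := by positivity
      nlinarith [sq_nonneg (r - 1)]
    exact h3.trans (by gcongr)
  calc (1 + r) ^ k ≤ (1 + r) ^ (k + 1) := pow_le_pow_right₀ (by linarith) (by omega)
    _ ≤ (2 * ((k : ℝ) + 1) * Real.exp (r ^ 2 / ((k : ℝ) + 1))) ^ (k + 1) := by gcongr
    _ = _ := by
      rw [mul_pow, ← Real.exp_nat_mul]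
      congr 2
      push_cast
      field_simp

lemma wl_sympl_tg {d : ℕ} (W : PhS d) : (fun X => symplForm W X).HasTemperateGrowth := by
  have : (fun X => symplForm W X) = (Real.pi • wL d W) := by
    funext X
    simp only [Pi.smul_apply, wL_apply, smul_eq_mul]
    field_simp
  rw [this]
  exact (Real.pi • wL d W).hasTemperateGrowth

/-- time frequency shifted Gaussian as Schwartz function -/
def wT {d : ℕ} (U W : PhS d) : SchwartzMap (PhS d) ℂ :=
  wExpS (fun X => 2 * Complex.I * (symplForm W X : ℂ) - (wQ (X - U) : ℂ))
    (by
      have h1 : (fun X : PhS d => (symplForm W X : ℂ)).HasTemperateGrowth :=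
        Function.HasTemperateGrowth.comp Function.Complex.hasTemperateGrowth_ofReal (wl_sympl_tg W)
      have h2 : (fun X : PhS d => (wQ (X - U) : ℂ)).HasTemperateGrowth :=
        Function.HasTemperateGrowth.comp Function.Complex.hasTemperateGrowth_ofReal
          (Function.HasTemperateGrowth.comp wQ_tg
            (Function.HasTemperateGrowth.sub Function.HasTemperateGrowth.id
              (Function.HasTemperateGrowth.const U)))
      exact Function.HasTemperateGrowth.sub
        (Function.HasTemperateGrowth.mul (Function.HasTemperateGrowth.const _) h1) h2)
    (by
      intro k
      refine ⟨(1 + ‖U‖) ^ k * (2 * ((k : ℝ) + 1)) ^ (k + 1), fun x => ?_⟩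
      change _ * ‖wE _ _‖ ≤ _
      rw [wE_norm]
      have h1 := wl_poly_exp k ‖x - U‖ (norm_nonneg _)
      have h2 : 1 + ‖x‖ ≤ (1 + ‖U‖) * (1 + ‖x - U‖) := by
        have : ‖x‖ ≤ ‖x - U‖ + ‖U‖ := by
          have := norm_add_le (x - U) U
          simpa using this
        nlinarith [norm_nonneg U, norm_nonneg (x - U), mul_nonneg (norm_nonneg U) (norm_nonneg (x - U))]
      have h3 : Real.exp (-wQ (x - U)) ≤ Real.exp (-‖x - U‖ ^ 2) := by
        apply Real.exp_le_exp.mpr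
        have := wQ_ge (x - U)
        linarith
      have h4 : Real.exp (‖x - U‖ ^ 2) * Real.exp (-‖x - U‖ ^ 2) = 1 := by
        rw [← Real.exp_add]; simp
      calc (1 + ‖x‖) ^ k * Real.exp (-wQ (x - U))
          ≤ ((1 + ‖U‖) * (1 + ‖x - U‖)) ^ k * Real.exp (-‖x - U‖ ^ 2) := by gcongr
        _ = (1 + ‖U‖) ^ k * (1 + ‖x - U‖) ^ k * Real.exp (-‖x - U‖ ^ 2) := by rw [mul_pow]
        _ ≤ (1 + ‖U‖) ^ k * ((2 * ((k : ℝ) + 1)) ^ (k + 1) * Real.exp (‖x - U‖ ^ 2)) *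
            Real.exp (-‖x - U‖ ^ 2) := by gcongr
        _ = (1 + ‖U‖) ^ k * (2 * ((k : ℝ) + 1)) ^ (k + 1) *
            (Real.exp (‖x - U‖ ^ 2) * Real.exp (-‖x - U‖ ^ 2)) := by ring
        _ = _ := by rw [h4, mul_one])

lemma wT_apply {d : ℕ} (U W X : PhS d) : wT U W X = wE (symplForm W X) (wQ (X - U)) := rfl

lemma wl_gauss_int {d : ℕ} (b : ℝ) (hb : 0 < b) (Y : PhS d) :
    ∫ Z : PhS d, wE (symplForm Y Z) (b * wQ Z) = ((Real.pi / b : ℝ) : ℂ) ^ d * wE 0 (wQ Y / b) := by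
  have h : ∀ Z : PhS d, wE (symplForm Y Z) (b * wQ Z) =
      Complex.exp (-(b:ℂ) * ‖Z.1‖ ^ 2 + (2 * Complex.I) * ⟪Y.2, Z.1⟫) *
      Complex.exp (-(b:ℂ) * ‖Z.2‖ ^ 2 + (-(2 * Complex.I)) * ⟪Y.1, Z.2⟫) := by
    intro Z
    unfold wE symplForm wQ
    rw [← Complex.exp_add, real_inner_comm Y.2 Z.1]
    congr 1
    push_cast
    ring
  have hb' : 0 < (b : ℂ).re := by simpa using hb
  simp_rw [h]
  rw [show (volume : Measure (PhS d)) = Measure.prod volume volume from rfl]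
  rw [integral_prod_mul (fun z : EuclideanSpace ℝ (Fin d) =>
      Complex.exp (-(b:ℂ) * ‖z‖ ^ 2 + (2 * Complex.I) * ⟪Y.2, z⟫))
    (fun z : EuclideanSpace ℝ (Fin d) =>
      Complex.exp (-(b:ℂ) * ‖z‖ ^ 2 + (-(2 * Complex.I)) * ⟪Y.1, z⟫))]
  rw [GaussianFourier.integral_cexp_neg_mul_sq_norm_add_of_euclideanSpace hb',
    GaussianFourier.integral_cexp_neg_mul_sq_norm_add_of_euclideanSpace hb']
  have hpb : ((Real.pi : ℂ) / b) ≠ 0 := by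
    apply div_ne_zero
    · exact_mod_cast Real.pi_ne_zero
    · exact_mod_cast hb.ne'
  have h1 : ((Real.pi : ℂ) / b) ^ (Fintype.card (Fin d) / 2 : ℂ) *
      ((Real.pi : ℂ) / b) ^ (Fintype.card (Fin d) / 2 : ℂ) = ((Real.pi / b : ℝ) : ℂ) ^ d := by
    rw [← Complex.cpow_add _ _ hpb, add_halves, Fintype.card_fin, Complex.cpow_natCast]
    push_cast; rfl
  rw [← h1]
  have h2 : Complex.exp ((2 * Complex.I) ^ 2 * ‖Y.2‖ ^ 2 / (4 * b)) *
      Complex.exp ((-(2 * Complex.I)) ^ 2 * ‖Y.1‖ ^ 2 / (4 * b)) = wE 0 (wQ Y / b) := by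
    unfold wE wQ
    rw [← Complex.exp_add]
    congr 1
    have : (b : ℂ) ≠ 0 := by exact_mod_cast hb.ne'
    rw [neg_sq, mul_pow, Complex.I_sq]
    push_cast
    field_simp
    ring
  rw [← h2]
  ring

end

open MeasureTheory Filter
open scoped ENNReal RealInnerProductSpace BigOperators
noncomputable section

lemma sf_add_left {d : ℕ} (a b c : PhS d) : symplForm (a + b) c = symplForm a c + symplForm b c := by
  simp only [symplForm, Prod.fst_add, Prod.snd_add, inner_add_left, inner_add_right]; ring
lemma sf_add_right {d : ℕ} (a b c : PhS d) : symplForm a (b + c) = symplForm a b + symplForm a c := by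
  simp only [symplForm, Prod.fst_add, Prod.snd_add, inner_add_left, inner_add_right]; ring
lemma sf_sub_left {d : ℕ} (a b c : PhS d) : symplForm (a - b) c = symplForm a c - symplForm b c := by
  simp only [symplForm, Prod.fst_sub, Prod.snd_sub, inner_sub_left, inner_sub_right]; ring
lemma sf_sub_right {d : ℕ} (a b c : PhS d) : symplForm a (b - c) = symplForm a b - symplForm a c := by
  simp only [symplForm, Prod.fst_sub, Prod.snd_sub, inner_sub_left, inner_sub_right]; ring
lemma sf_neg_left {d : ℕ} (a c : PhS d) : symplForm (-a) c = - symplForm a c := by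
  simp only [symplForm, Prod.fst_neg, Prod.snd_neg, inner_neg_left, inner_neg_right]; ring
lemma sf_neg_right {d : ℕ} (a c : PhS d) : symplForm a (-c) = - symplForm a c := by
  simp only [symplForm, Prod.fst_neg, Prod.snd_neg, inner_neg_left, inner_neg_right]; ring
lemma sf_smul_left {d : ℕ} (r : ℝ) (a c : PhS d) : symplForm (r • a) c = r * symplForm a c := by
  simp only [symplForm, Prod.smul_fst, Prod.smul_snd, real_inner_smul_left, real_inner_smul_right]; ring
lemma sf_smul_right {d : ℕ} (r : ℝ) (a c : PhS d) : symplForm a (r • c) = r * symplForm a c := by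
  simp only [symplForm, Prod.smul_fst, Prod.smul_snd, real_inner_smul_left, real_inner_smul_right]; ring
lemma sf_self {d : ℕ} (a : PhS d) : symplForm a a = 0 := by
  simp only [symplForm]; ring

lemma sf_cont {d : ℕ} : Continuous (fun P : PhS d × PhS d => symplForm P.1 P.2) := by
  unfold symplForm; fun_prop

lemma wQ_cont {d : ℕ} : Continuous (wQ : PhS d → ℝ) := by unfold wQ; fun_prop

lemma wQ_par {d : ℕ} (Z A B : PhS d) :
    wQ (Z - A) + wQ (Z - B) = 2 * wQ (Z - (2⁻¹ : ℝ) • (A + B)) + wQ (A - B) / 2 := by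
  have key : ∀ z a b : EuclideanSpace ℝ (Fin d), ‖z - a‖ ^ 2 + ‖z - b‖ ^ 2 =
      2 * ‖z - (2⁻¹ : ℝ) • (a + b)‖ ^ 2 + ‖a - b‖ ^ 2 / 2 := by
    intro z a b
    have h := parallelogram_law_with_norm ℝ (z - (2⁻¹ : ℝ) • (a + b)) ((2⁻¹ : ℝ) • (a - b))
    have e1 : z - (2⁻¹ : ℝ) • (a + b) + (2⁻¹ : ℝ) • (a - b) = z - b := by module
    have e2 : z - (2⁻¹ : ℝ) • (a + b) - (2⁻¹ : ℝ) • (a - b) = z - a := by module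
    have e3 : ‖(2⁻¹ : ℝ) • (a - b)‖ = 2⁻¹ * ‖a - b‖ := by
      rw [norm_smul]; simp
    rw [e1, e2, e3] at h
    nlinarith
  unfold wQ
  have h1 := key Z.1 A.1 B.1
  have h2 := key Z.2 A.2 B.2
  simp only [Prod.fst_sub, Prod.snd_sub, Prod.smul_fst, Prod.smul_snd, Prod.fst_add, Prod.snd_add]
  linarith

lemma wl_J {d : ℕ} (A B Y : PhS d) :
    ∫ Z : PhS d, wE (symplForm Y Z) (wQ (Z - A) + wQ (Z - B)) =
      ((Real.pi / 2 : ℝ) : ℂ) ^ d *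
        wE (symplForm Y (A + B) / 2) (wQ (A - B) / 2 + wQ Y / 2) := by
  have h := integral_sub_right_eq_self (μ := (volume : Measure (PhS d)))
    (fun Z => wE (symplForm Y Z) (2 * wQ Z) * wE (symplForm Y (A + B) / 2) (wQ (A - B) / 2))
      ((2⁻¹ : ℝ) • (A + B))
  have e : ∀ Z : PhS d, wE (symplForm Y Z) (wQ (Z - A) + wQ (Z - B)) =
      wE (symplForm Y (Z - (2⁻¹ : ℝ) • (A + B))) (2 * wQ (Z - (2⁻¹ : ℝ) • (A + B))) *
        wE (symplForm Y (A + B) / 2) (wQ (A - B) / 2) := by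
    intro Z
    rw [wE_mul, wQ_par, sf_sub_right, sf_smul_right]
    congr 1
    ring
  simp_rw [e]
  rw [h, integral_mul_const, wl_gauss_int 2 two_pos, mul_assoc, wE_mul]
  congr 2
  · ring
  · ring

lemma wl_ft {d : ℕ} (U W Y : PhS d) :
    symplFT d (wT U W) Y = wE (symplForm (W + Y) U) (wQ (Y + W)) := by
  unfold symplFT
  have h := integral_sub_right_eq_self (μ := (volume : Measure (PhS d)))
    (fun Z => wE (symplForm (W + Y) Z) (1 * wQ Z) * wE (symplForm (W + Y) U) 0) U
  have e : ∀ Z : PhS d, wT U W Z * Complex.exp (2 * Complex.I * (symplForm Y Z : ℂ)) =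
     wE (symplForm (W + Y) (Z - U)) (1 * wQ (Z - U)) * wE (symplForm (W + Y) U) 0 := by
    intro Z
    rw [wT_apply, wE_phase, wE_mul, wE_mul]
    simp only [sf_sub_right, sf_add_left]
    congr 1 <;> ring
  simp_rw [e]
  rw [h, integral_mul_const, wl_gauss_int 1 one_pos, mul_assoc, wE_mul]
  have : (Real.pi : ℂ) ≠ 0 := by exact_mod_cast Real.pi_ne_zero
  rw [div_one, inv_mul_cancel_left₀ (pow_ne_zero _ this)]
  congr 1
  · ring
  · rw [add_comm Y W]; ring

lemma wl_const (d : ℕ) : (((2 * Real.pi) ^ (-(d : ℝ) / 2) : ℝ) : ℂ) *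
    (((2 / Real.pi) ^ ((d : ℝ) / 2) : ℝ) : ℂ) = ((Real.pi : ℂ) ^ d)⁻¹ := by
  have hp := Real.pi_pos
  rw [← Complex.ofReal_mul, ← Complex.ofReal_pow, ← Complex.ofReal_inv]
  congr 1
  rw [neg_div, Real.rpow_neg (by positivity), ← Real.inv_rpow (by positivity),
    ← Real.mul_rpow (by positivity) (by positivity)]
  have : (2 * Real.pi)⁻¹ * (2 / Real.pi) = (Real.pi⁻¹) ^ (2 : ℝ) := by
    rw [Real.rpow_two]; field_simp
  rw [this, ← Real.rpow_mul (by positivity), show (2 : ℝ) * ((d : ℝ) / 2) = d by ring,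
    Real.rpow_natCast, inv_pow]

lemma weylProd_eq {d : ℕ} (a b : PhS d → ℂ) (X : PhS d) :
    weylProd d a b X = ((Real.pi : ℂ) ^ d)⁻¹ *
      ∫ Y : PhS d, a (X - Y) * symplFT d b Y * Complex.exp (2 * Complex.I * (symplForm X Y : ℂ)) := by
  unfold weylProd twistConv
  rw [← mul_assoc, wl_const]

lemma weylProd_T {d : ℕ} (U1 W1 U2 W2 X : PhS d) :
    weylProd d (wT U1 W1) (wT U2 W2) X = ((2 : ℂ) ^ d)⁻¹ *
      wE (symplForm W1 X + symplForm W2 U2 + symplForm (X - W1 - U2) (X - U1 - W2) / 2)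
        (wQ (X - U1 + W2) / 2 + wQ (X - W1 - U2) / 2) := by
  rw [weylProd_eq]
  have hsymm : ∀ Y : PhS d, wQ (X - Y - U1) = wQ (Y - (X - U1)) := by
    intro Y
    have : X - Y - U1 = - (Y - (X - U1)) := by abel
    rw [this]; simp only [wQ, Prod.fst_neg, Prod.snd_neg, norm_neg]
  have e : ∀ Y : PhS d, wT U1 W1 (X - Y) * symplFT d (wT U2 W2) Y *
      Complex.exp (2 * Complex.I * (symplForm X Y : ℂ)) =
      wE (symplForm W1 X + symplForm W2 U2) 0 *
      wE (symplForm (X - W1 - U2) Y) (wQ (Y - (X - U1)) + wQ (Y - (-W2))) := by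
    intro Y
    rw [wl_ft, wT_apply, wE_phase, wE_mul, wE_mul, wE_mul, hsymm, sub_neg_eq_add]
    simp only [sf_sub_left, sf_sub_right, sf_add_left]
    rw [symplForm_swap Y U2]
    congr 1 <;> ring
  simp_rw [e]
  rw [integral_const_mul, wl_J]
  have hc : ((Real.pi : ℂ) ^ d)⁻¹ * ((Real.pi / 2 : ℝ) : ℂ) ^ d = ((2 : ℂ) ^ d)⁻¹ := by
    have : (Real.pi : ℂ) ≠ 0 := by exact_mod_cast Real.pi_ne_zero
    push_cast
    rw [div_pow]
    field_simp
  calc _ = (((Real.pi : ℂ) ^ d)⁻¹ * ((Real.pi / 2 : ℝ) : ℂ) ^ d) *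
        (wE (symplForm W1 X + symplForm W2 U2) 0 *
          wE (symplForm (X - W1 - U2) (X - U1 + -W2) / 2)
            (wQ (X - U1 - -W2) / 2 + wQ (X - W1 - U2) / 2)) := by ring
    _ = _ := by rw [hc, wE_mul, zero_add, sub_neg_eq_add, ← sub_eq_add_neg]

lemma weylProd_diag {d : ℕ} (U1 W1 U2 W2 : PhS d) (h : U2 = U1 - W1 - W2)
    (h0 : symplForm W2 W1 = 0) (X : PhS d) :
    weylProd d (wT U1 W1) (wT U2 W2) X = ((2 : ℂ) ^ d)⁻¹ * wT (U1 - W2) (W1 + W2) X := by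
  rw [weylProd_T, wT_apply]
  congr 1
  have e1 : X - W1 - U2 = X - U1 + W2 := by rw [h]; abel
  have e2 : X - (U1 - W2) = X - U1 + W2 := by abel
  rw [e1, e2, h]
  congr 1
  · simp only [sf_sub_left, sf_sub_right, sf_add_left, sf_self, h0]
    rw [symplForm_swap X W2, symplForm_swap U1 W2, symplForm_swap X U1]
    ring
  · ring

lemma weylProd_off {d : ℕ} (U1 W1 U2 W2 X : PhS d) :
    ‖weylProd d (wT U1 W1) (wT U2 W2) X‖ ≤ (1 + ‖W1 + W2 + U2 - U1‖ ^ 2 / 4)⁻¹ := by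
  rw [weylProd_T, norm_mul, wE_norm]
  have h1 : ‖((2 : ℂ) ^ d)⁻¹‖ ≤ 1 := by
    rw [norm_inv, norm_pow]
    apply inv_le_one_of_one_le₀
    apply one_le_pow₀
    simp
  have h2 := wQ_ge (X - U1 + W2)
  have h3 := wQ_ge (X - W1 - U2)
  have h4 : ‖W1 + W2 + U2 - U1‖ ≤ ‖X - U1 + W2‖ + ‖X - W1 - U2‖ := by
    have := norm_sub_le (X - U1 + W2) (X - W1 - U2)
    rwa [show X - U1 + W2 - (X - W1 - U2) = W1 + W2 + U2 - U1 by abel] at this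
  set t := ‖W1 + W2 + U2 - U1‖
  have ht : 0 ≤ t := norm_nonneg _
  have h5 : t ^ 2 / 4 ≤ wQ (X - U1 + W2) / 2 + wQ (X - W1 - U2) / 2 := by
    nlinarith [sq_nonneg (‖X - U1 + W2‖ - ‖X - W1 - U2‖)]
  rw [Real.exp_neg]
  calc _ ≤ 1 * (Real.exp (wQ (X - U1 + W2) / 2 + wQ (X - W1 - U2) / 2))⁻¹ := by gcongr
    _ ≤ _ := by
      rw [one_mul]
      apply inv_anti₀ (by positivity)
      have := Real.add_one_le_exp (wQ (X - U1 + W2) / 2 + wQ (X - W1 - U2) / 2)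
      linarith
end

open MeasureTheory Filter
open scoped ENNReal RealInnerProductSpace BigOperators
noncomputable section

/-- continuous bounded functions -/
def wCB {d : ℕ} (f : PhS d → ℂ) : Prop := Continuous f ∧ ∃ M : ℝ, ∀ x, ‖f x‖ ≤ M

lemma wCB_schwartz {d : ℕ} (f : SchwartzMap (PhS d) ℂ) : wCB (f : PhS d → ℂ) := by
  refine ⟨f.continuous, ?_⟩
  obtain ⟨C, _, h⟩ := wl_schw_bd0 f 0
  exact ⟨C, fun x => by simpa using h x⟩

lemma wCB_zero {d : ℕ} : wCB (fun _ : PhS d => (0 : ℂ)) := ⟨continuous_const, 0, fun x => by simp⟩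

lemma wCB_add {d : ℕ} {f g : PhS d → ℂ} (hf : wCB f) (hg : wCB g) : wCB (fun x => f x + g x) := by
  obtain ⟨h1, M, hM⟩ := hf
  obtain ⟨h2, M', hM'⟩ := hg
  exact ⟨h1.add h2, M + M', fun x => (norm_add_le _ _).trans (add_le_add (hM x) (hM' x))⟩

lemma wCB_smul {d : ℕ} (c : ℂ) {f : PhS d → ℂ} (hf : wCB f) : wCB (fun x => c * f x) := by
  obtain ⟨h1, M, hM⟩ := hf
  refine ⟨continuous_const.mul h1, ‖c‖ * M, fun x => ?_⟩
  rw [norm_mul]; gcongr; exact hM x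

lemma wCB_sum {d : ℕ} {ι : Type*} (s : Finset ι) (f : ι → PhS d → ℂ) (hf : ∀ i ∈ s, wCB (f i)) :
    wCB (fun x => ∑ i ∈ s, f i x) := by
  classical
  induction s using Finset.induction_on with
  | empty => simpa using wCB_zero
  | insert a s ha ih =>
    simp_rw [Finset.sum_insert ha]
    exact wCB_add (hf a (by simp)) (ih fun i hi => hf i (by simp [hi]))

lemma wCB_weyl {d : ℕ} (U1 W1 U2 W2 : PhS d) : wCB (weylProd d (wT U1 W1) (wT U2 W2)) := by
  constructor
  · have : weylProd d (wT U1 W1) (wT U2 W2) = fun X => _ := funext fun X => weylProd_T U1 W1 U2 W2 X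
    rw [this]
    unfold wE wQ symplForm
    fun_prop
  · exact ⟨_, fun X => weylProd_off U1 W1 U2 W2 X⟩

lemma wl_phase_cont {d : ℕ} (Y : PhS d) :
    Continuous fun Z : PhS d => Complex.exp (2 * Complex.I * (symplForm Y Z : ℂ)) := by
  unfold symplForm; fun_prop

lemma wl_shift_int {d : ℕ} (Φ : SchwartzMap (PhS d) ℂ) (X : PhS d) :
    Integrable (fun Z => (starRingEnd ℂ) (Φ (Z - X))) := by
  have := (wConj Φ X).integrable (μ := volume)
  exact this.congr (ae_of_all _ fun Z => wConj_apply Φ X Z)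

lemma wl_V_int {d : ℕ} (Φ : SchwartzMap (PhS d) ℂ) {f : PhS d → ℂ} (hf : wCB f) (X Y : PhS d) :
    Integrable (fun Z => f Z * (starRingEnd ℂ) (Φ (Z - X)) *
      Complex.exp (2 * Complex.I * (symplForm Y Z : ℂ))) := by
  obtain ⟨hc, M, hM⟩ := hf
  refine Integrable.mul_bdd (c := 1) ((wl_shift_int Φ X).bdd_mul (c := M) hc.aestronglyMeasurable
    (ae_of_all _ hM)) (wl_phase_cont Y).aestronglyMeasurable (ae_of_all _ fun Z => ?_)
  rw [wl_norm_phase]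

lemma wl_V_add {d : ℕ} (Φ : SchwartzMap (PhS d) ℂ) {f g : PhS d → ℂ} (hf : wCB f) (hg : wCB g)
    (X Y : PhS d) : symplSTFT d Φ (fun x => f x + g x) X Y =
      symplSTFT d Φ f X Y + symplSTFT d Φ g X Y := by
  unfold symplSTFT
  rw [← mul_add, ← integral_add (wl_V_int Φ hf X Y) (wl_V_int Φ hg X Y)]
  congr 2
  funext Z
  ring

lemma wl_V_smul {d : ℕ} (Φ : SchwartzMap (PhS d) ℂ) (c : ℂ) (f : PhS d → ℂ)
    (X Y : PhS d) : symplSTFT d Φ (fun x => c * f x) X Y = c * symplSTFT d Φ f X Y := by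
  unfold symplSTFT
  rw [mul_left_comm]
  congr 1
  rw [← integral_const_mul]
  congr 1
  funext Z
  ring

lemma wl_V_sum {d : ℕ} (Φ : SchwartzMap (PhS d) ℂ) {ι : Type*} (s : Finset ι) (f : ι → PhS d → ℂ)
    (hf : ∀ i, wCB (f i)) (X Y : PhS d) :
    symplSTFT d Φ (fun x => ∑ i ∈ s, f i x) X Y = ∑ i ∈ s, symplSTFT d Φ (f i) X Y := by
  classical
  induction s using Finset.induction_on with
  | empty => simp [symplSTFT]
  | insert a s ha ih =>
    simp_rw [Finset.sum_insert ha]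
    rw [wl_V_add Φ (hf a) (wCB_sum s f fun i _ => hf i), ih]

lemma wl_V_shift {d : ℕ} (Φ : SchwartzMap (PhS d) ℂ) (U W X Y : PhS d) :
    ‖symplSTFT d Φ (wT U W) X Y‖ = ‖symplSTFT d Φ (wT 0 0) (X - U) (Y + W)‖ := by
  have h := integral_sub_right_eq_self (μ := (volume : Measure (PhS d)))
    (fun Z => wE (symplForm (Y + W) U) 0 * (wT 0 0 Z * (starRingEnd ℂ) (Φ (Z - (X - U))) *
      Complex.exp (2 * Complex.I * (symplForm (Y + W) Z : ℂ)))) U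
  have e : ∀ Z, wT U W Z * (starRingEnd ℂ) (Φ (Z - X)) *
      Complex.exp (2 * Complex.I * (symplForm Y Z : ℂ)) =
      wE (symplForm (Y + W) U) 0 * (wT 0 0 (Z - U) * (starRingEnd ℂ) (Φ (Z - U - (X - U))) *
      Complex.exp (2 * Complex.I * (symplForm (Y + W) (Z - U) : ℂ))) := by
    intro Z
    rw [sub_sub_sub_cancel_right, wT_apply, wT_apply, wE_phase, wE_phase]
    rw [mul_right_comm, wE_mul, mul_right_comm _ _ (wE _ _), wE_mul, ← mul_assoc, wE_mul, sub_zero]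
    congr 2
    · have h00 : symplForm (0 : PhS d) (Z - U) = 0 := by simp [symplForm]
      rw [h00]
      simp only [sf_sub_right, sf_add_left]
      ring
    · ring
  unfold symplSTFT
  simp_rw [e]
  rw [h, integral_const_mul, norm_mul, norm_mul, norm_mul, wE_norm]
  simp

lemma wl_V_sup {d : ℕ} (Φ : SchwartzMap (PhS d) ℂ) : ∃ K : ℝ, 0 < K ∧
    ∀ (f : PhS d → ℂ) (M : ℝ), 0 ≤ M → (∀ x, ‖f x‖ ≤ M) → ∀ X Y, ‖symplSTFT d Φ f X Y‖ ≤ K * M := by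
  have hI : 0 ≤ ∫ Z, ‖Φ Z‖ := integral_nonneg fun Z => norm_nonneg _
  refine ⟨(Real.pi ^ d)⁻¹ * (∫ Z, ‖Φ Z‖) + 1, by positivity, fun f M hM hf X Y => ?_⟩
  unfold symplSTFT
  rw [norm_mul, wl_norm_pi]
  have : ‖∫ Z : PhS d, f Z * (starRingEnd ℂ) (Φ (Z - X)) *
      Complex.exp (2 * Complex.I * (symplForm Y Z : ℂ))‖ ≤ ∫ Z, M * ‖Φ (Z - X)‖ := by
    apply norm_integral_le_of_norm_le
    · have := (wl_shift_int Φ X).norm.const_mul M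
      simpa using this
    · refine ae_of_all _ fun Z => ?_
      rw [norm_mul, norm_mul, wl_norm_phase, mul_one, RCLike.norm_conj]
      gcongr
      exact hf Z
  rw [integral_const_mul, integral_sub_right_eq_self (fun Z => ‖Φ Z‖) X] at this
  calc _ ≤ (Real.pi ^ d)⁻¹ * (M * ∫ Z, ‖Φ Z‖) := by gcongr
    _ = (Real.pi ^ d)⁻¹ * (∫ Z, ‖Φ Z‖) * M := by ring
    _ ≤ _ := by gcongr; linarith

/-- sums of shifted Gaussians -/
def wS {d : ℕ} (n : ℕ) (U W : ℕ → PhS d) : SchwartzMap (PhS d) ℂ :=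
  ∑ k ∈ Finset.range n, wT (U k) (W k)

lemma wS_apply {d : ℕ} (n : ℕ) (U W : ℕ → PhS d) (X : PhS d) :
    wS n U W X = ∑ k ∈ Finset.range n, wT (U k) (W k) X := by
  unfold wS
  rw [sum_apply]

lemma wl_ft_sum {d : ℕ} (n : ℕ) (U W : ℕ → PhS d) (Y : PhS d) :
    symplFT d (wS n U W) Y = ∑ k ∈ Finset.range n, symplFT d (wT (U k) (W k)) Y := by
  unfold symplFT
  simp_rw [wS_apply, Finset.sum_mul]
  rw [integral_finsetSum, Finset.mul_sum]
  intro k _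
  refine Integrable.mul_bdd (c := 1) ((wT (U k) (W k)).integrable) 
    (wl_phase_cont Y).aestronglyMeasurable (ae_of_all _ fun Z => ?_)
  rw [wl_norm_phase]

instance wl_neginv (d : ℕ) : (volume : Measure (PhS d)).IsNegInvariant :=
  Measure.IsAddHaarMeasure.isNegInvariant_of_regular _

lemma wl_weyl_int {d : ℕ} (U1 W1 U2 W2 X : PhS d) : Integrable (fun Y => wT U1 W1 (X - Y) *
    symplFT d (wT U2 W2) Y * Complex.exp (2 * Complex.I * (symplForm X Y : ℂ))) := by
  have h1 : Integrable (fun Y => wT U1 W1 (X - Y)) := (wT U1 W1).integrable.comp_sub_left X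
  have h2 : Continuous (symplFT d (wT U2 W2)) := by
    have : symplFT d (wT U2 W2) = fun Y => _ := funext fun Y => wl_ft U2 W2 Y
    rw [this]
    unfold wE wQ symplForm
    fun_prop
  refine Integrable.mul_bdd (c := 1) (Integrable.mul_bdd (c := 1) h1 h2.aestronglyMeasurable
    (ae_of_all _ fun Z => ?_))
    (wl_phase_cont X).aestronglyMeasurable (ae_of_all _ fun Z => ?_)
  · rw [wl_ft, wE_norm]
    apply Real.exp_le_one_iff.mpr
    have := wQ_ge (Z + W2)
    nlinarith [sq_nonneg ‖Z + W2‖]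
  · rw [wl_norm_phase]

lemma weylProd_sum {d : ℕ} (n m : ℕ) (U1 W1 U2 W2 : ℕ → PhS d) (X : PhS d) :
    weylProd d (wS n U1 W1) (wS m U2 W2) X = ∑ k ∈ Finset.range n, ∑ j ∈ Finset.range m,
      weylProd d (wT (U1 k) (W1 k)) (wT (U2 j) (W2 j)) X := by
  rw [weylProd_eq]
  simp_rw [weylProd_eq (wT _ _), ← Finset.mul_sum, wl_ft_sum, wS_apply, Finset.sum_mul_sum, Finset.sum_mul]
  congr 1
  rw [integral_finsetSum]
  · apply Finset.sum_congr rfl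
    intro k _
    rw [integral_finsetSum]
    intro j _
    exact wl_weyl_int _ _ _ _ _
  · intro k _
    apply integrable_finsetSum
    intro j _
    exact wl_weyl_int _ _ _ _ _
end

open MeasureTheory Filter
open scoped ENNReal RealInnerProductSpace BigOperators
noncomputable section

lemma wl_ft_inj {d : ℕ} (f : SchwartzMap (PhS d) ℂ)
    (h : ∀ Y : PhS d, ∫ Z, f Z * Complex.exp (2 * Complex.I * (symplForm Y Z : ℂ)) = 0)
    (Z : PhS d) : f Z = 0 := by
  let E := EuclideanSpace ℝ (Fin d)
  let g : WithLp 2 (E × E) → ℂ := fun v => f (WithLp.ofLp v)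
  have hmp : MeasurePreserving (@WithLp.ofLp 2 (E × E)) := WithLp.volume_preserving_ofLp E E
  have hme : MeasurableEmbedding (@WithLp.ofLp 2 (E × E)) :=
    (MeasurableEquiv.toLp 2 (E × E)).symm.measurableEmbedding
  have hg1 : Continuous g := f.continuous.comp (WithLp.prod_continuous_ofLp 2 E E)
  have hg2 : Integrable g := (hmp.integrable_comp_emb hme).mpr f.integrable
  have hF : FourierTransform.fourier g = (0 : WithLp 2 (E × E) → ℂ) := by
    funext w
    rw [Real.fourier_eq', Pi.zero_apply]
    have h1 := hmp.integral_comp hme (fun Z : E × E =>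
      Complex.exp (((-2 * Real.pi * (⟪Z.1, w.fst⟫ + ⟪Z.2, w.snd⟫) : ℝ) : ℂ) * Complex.I) • f Z)
    have h2 := h (Real.pi • w.snd, -(Real.pi • w.fst))
    rw [← h2]
    refine Eq.trans ?_ (h1.trans ?_)
    · apply integral_congr_ae
      refine ae_of_all _ fun v => ?_
      simp only [WithLp.prod_inner_apply]
      rfl
    · apply integral_congr_ae
      refine ae_of_all _ fun v => ?_
      simp only [symplForm, smul_eq_mul]
      rw [mul_comm]
      congr 2
      rw [inner_neg_right, real_inner_smul_left, real_inner_smul_right, real_inner_comm v.2 w.snd]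
      push_cast
      ring
  have h3 := hg1.fourierInv_fourier_eq hg2 (by rw [hF]; exact integrable_zero _ _ _)
  have h4 : g (WithLp.toLp 2 Z) = 0 := by
    rw [← h3, hF, Real.fourierInv_eq']
    simp
  exact h4

lemma wl_nonvanish {d : ℕ} (Φ : SchwartzMap (PhS d) ℂ) (hΦ : Φ ≠ 0) :
    ∃ X Y, symplSTFT d Φ (wT 0 0) X Y ≠ 0 := by
  by_contra! hcon
  apply hΦ
  ext Z
  have h1 : ∀ Y : PhS d, ∫ Z', wProd Φ (wT 0 0) (-Z) Z' *
      Complex.exp (2 * Complex.I * (symplForm Y Z' : ℂ)) = 0 := by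
    intro Y
    have := hcon (-Z) Y
    unfold symplSTFT at this
    have hpi : ((Real.pi : ℂ) ^ d)⁻¹ ≠ 0 := by
      apply inv_ne_zero; apply pow_ne_zero; exact_mod_cast Real.pi_ne_zero
    have h2 := (mul_eq_zero.mp this).resolve_left hpi
    simp_rw [wProd_apply]
    exact h2
  have h2 := wl_ft_inj _ h1 0
  rw [wProd_apply, wT_apply] at h2
  have h3 := (mul_eq_zero.mp h2).resolve_left (by unfold wE; exact Complex.exp_ne_zero _)
  simpa using h3

lemma wl_V_cont {d : ℕ} (Φ : SchwartzMap (PhS d) ℂ) :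
    Continuous (fun P : PhS d × PhS d => symplSTFT d Φ (wT 0 0) P.1 P.2) := by
  unfold symplSTFT
  apply Continuous.mul continuous_const
  obtain ⟨M, _, hM⟩ := wl_schw_bd0 Φ 0
  apply continuous_of_dominated (bound := fun Z => ‖wT (0 : PhS d) 0 Z‖ * M)
  · intro P
    exact (wl_V_int Φ (wCB_schwartz _) P.1 P.2).aestronglyMeasurable
  · intro P
    refine ae_of_all _ fun Z => ?_
    rw [norm_mul, norm_mul, wl_norm_phase, mul_one, RCLike.norm_conj]
    gcongr
    simpa using hM (Z - P.1)
  · exact (wT (0 : PhS d) 0).integrable.norm.mul_const M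
  · refine ae_of_all _ fun Z => ?_
    have := Φ.continuous
    unfold symplForm
    fun_prop

lemma wl_consts {d : ℕ} (Φ : SchwartzMap (PhS d) ℂ) (hΦ : Φ ≠ 0) :
    ∃ (D δ ρ K : ℝ) (X0 Y0 : PhS d), 0 < D ∧ 0 < δ ∧ 0 < ρ ∧ 0 < K ∧
      (∀ U W X Y, ‖symplSTFT d Φ (wT U W) X Y‖ ≤ D * (wG d (X - U) * wG d (Y + W))) ∧
      (∀ U W X Y, X - U ∈ Metric.ball X0 ρ → Y + W ∈ Metric.ball Y0 ρ →
        δ ≤ ‖symplSTFT d Φ (wT U W) X Y‖) ∧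
      ∀ (f : PhS d → ℂ) (M : ℝ), 0 ≤ M → (∀ x, ‖f x‖ ≤ M) →
        ∀ X Y, ‖symplSTFT d Φ f X Y‖ ≤ K * M := by
  obtain ⟨D, hD, H1⟩ := wl_decay Φ (wT 0 0)
  obtain ⟨K, hK, H3⟩ := wl_V_sup Φ
  obtain ⟨X0, Y0, hne⟩ := wl_nonvanish Φ hΦ
  set δ := ‖symplSTFT d Φ (wT 0 0) X0 Y0‖ / 2 with hδ
  have hpos : 0 < ‖symplSTFT d Φ (wT 0 0) X0 Y0‖ := norm_pos_iff.mpr hne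
  have hc := (wl_V_cont Φ).norm
  have hopen : IsOpen {P : PhS d × PhS d | δ < ‖symplSTFT d Φ (wT 0 0) P.1 P.2‖} :=
    isOpen_lt continuous_const hc
  obtain ⟨ρ, hρ, hball⟩ := Metric.isOpen_iff.mp hopen (X0, Y0) (by
    show δ < ‖symplSTFT d Φ (wT 0 0) X0 Y0‖
    linarith)
  refine ⟨D, δ, ρ, K, X0, Y0, hD, by linarith, hρ, hK, fun U W X Y => ?_, fun U W X Y hX hY => ?_, H3⟩
  · rw [wl_V_shift]; exact H1 _ _
  · rw [wl_V_shift]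
    have : (X - U, Y + W) ∈ Metric.ball (X0, Y0) ρ := by
      rw [← ball_prod_same]; exact ⟨hX, hY⟩
    exact (hball this).le
end

open MeasureTheory Filter
open scoped ENNReal RealInnerProductSpace BigOperators
noncomputable section

/-- extended-real weight -/
def wg (d : ℕ) (X : PhS d) : ℝ≥0∞ := ENNReal.ofReal (wG d X)

lemma wg_le_one (d : ℕ) (X : PhS d) : wg d X ≤ 1 := by
  unfold wg; rw [← ENNReal.ofReal_one]; exact ENNReal.ofReal_le_ofReal (wG_le_one d X)

lemma wg_meas (d : ℕ) : Measurable (wg d) := (wG_cont d).measurable.ennreal_ofReal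

/-- total mass -/
def wA (d : ℕ) : ℝ≥0∞ := ∫⁻ X, wg d X

lemma wA_ne_top (d : ℕ) : wA d ≠ ∞ := by
  have := (wG_integrable d).lintegral_lt_top
  exact this.ne

lemma wA_sub {d : ℕ} (U : PhS d) : ∫⁻ X, wg d (X - U) = wA d :=
  lintegral_sub_right_eq_self (wg d) U

lemma wA_add {d : ℕ} (U : PhS d) : ∫⁻ X, wg d (X + U) = wA d :=
  lintegral_add_right_eq_self (wg d) U

lemma wg_sub_meas {d : ℕ} (U : PhS d) : Measurable fun X => wg d (X - U) :=
  (wg_meas d).comp (measurable_id.sub_const U)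

lemma wg_add_meas {d : ℕ} (U : PhS d) : Measurable fun X => wg d (X + U) :=
  (wg_meas d).comp (measurable_id.add_const U)

lemma rcp_nonneg (p : ℝ≥0∞) : 0 ≤ rcp p := ENNReal.toReal_nonneg

lemma wl_sep {d : ℕ} (n : ℕ) (z : ℕ → PhS d) (R : ℝ) (hR : 2 * (n : ℝ) ≤ R)
    (hsep : ∀ k j, k ≠ j → R ≤ ‖z k - z j‖) (Z : PhS d) :
    ∑ k ∈ Finset.range n, wg d (Z - z k) ≤ 2 := by
  have hn : (0 : ℝ) ≤ n := Nat.cast_nonneg n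
  have hfar : ∃ k0 : ℕ, ∀ k, k ≠ k0 → R / 2 ≤ ‖Z - z k‖ := by
    by_cases h : ∃ k0, ‖Z - z k0‖ < R / 2
    · obtain ⟨k0, hk0⟩ := h
      refine ⟨k0, fun k hk => ?_⟩
      have h1 := hsep k k0 hk
      have h2 : ‖z k - z k0‖ ≤ ‖Z - z k‖ + ‖Z - z k0‖ := by
        have := norm_sub_le (Z - z k0) (Z - z k)
        rw [show Z - z k0 - (Z - z k) = z k - z k0 by abel] at this
        linarith
      linarith
    · push Not at h
      exact ⟨0, fun k _ => h k⟩
  obtain ⟨k0, hk0⟩ := hfar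
  have hreal : ∑ k ∈ Finset.range n, wG d (Z - z k) ≤ 2 := by
    calc ∑ k ∈ Finset.range n, wG d (Z - z k)
        ≤ ∑ k ∈ Finset.range n, ((if k = k0 then (1:ℝ) else 0) + (1 + (n:ℝ))⁻¹) := by
          apply Finset.sum_le_sum
          intro k _
          by_cases hk : k = k0
          · rw [if_pos hk]
            have := wG_le_one d (Z - z k)
            have : (0:ℝ) ≤ (1 + (n:ℝ))⁻¹ := by positivity
            linarith
          · rw [if_neg hk, zero_add]
            exact wG_le d _ n hn (by have := hk0 k hk; linarith)
      _ ≤ 1 + 1 := by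
          rw [Finset.sum_add_distrib]
          apply add_le_add
          · rw [Finset.sum_ite_eq']
            split_ifs <;> norm_num
          · rw [Finset.sum_const, Finset.card_range, nsmul_eq_mul, ← div_eq_mul_inv,
              div_le_one (by positivity)]
            linarith
      _ = 2 := by norm_num
  unfold wg
  rw [← ENNReal.ofReal_sum_of_nonneg fun k _ => (wG_pos d _).le]
  exact (ENNReal.ofReal_le_ofReal hreal).trans (by simp)

lemma wl_V_wS {d : ℕ} (Φ : SchwartzMap (PhS d) ℂ) (n : ℕ) (U W : ℕ → PhS d) (X Y : PhS d) :
    symplSTFT d Φ (wS n U W) X Y = ∑ k ∈ Finset.range n, symplSTFT d Φ (wT (U k) (W k)) X Y := by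
  have : (wS n U W : PhS d → ℂ) = fun X => ∑ k ∈ Finset.range n, wT (U k) (W k) X :=
    funext fun X => wS_apply n U W X
  rw [this]
  exact wl_V_sum Φ _ (fun k => (wT (U k) (W k) : PhS d → ℂ)) (fun k => wCB_schwartz _) X Y

lemma wl_V_bound {d : ℕ} (Φ : SchwartzMap (PhS d) ℂ) (D : ℝ) (hD : 0 < D)
    (H : ∀ U W X Y, ‖symplSTFT d Φ (wT U W) X Y‖ ≤ D * (wG d (X - U) * wG d (Y + W)))
    (n : ℕ) (U W : ℕ → PhS d) (X Y : PhS d) :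
    ENNReal.ofReal (‖symplSTFT d Φ (wS n U W) X Y‖ * 1) ≤
      ENNReal.ofReal D * ∑ k ∈ Finset.range n, wg d (X - U k) * wg d (Y + W k) := by
  rw [mul_one, wl_V_wS, Finset.mul_sum]
  have h1 : ‖∑ k ∈ Finset.range n, symplSTFT d Φ (wT (U k) (W k)) X Y‖ ≤
      ∑ k ∈ Finset.range n, D * (wG d (X - U k) * wG d (Y + W k)) :=
    (norm_sum_le _ _).trans (Finset.sum_le_sum fun k _ => H _ _ _ _)
  refine (ENNReal.ofReal_le_ofReal h1).trans ?_
  rw [ENNReal.ofReal_sum_of_nonneg]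
  · apply Finset.sum_le_sum
    intro k _
    unfold wg
    rw [ENNReal.ofReal_mul hD.le, ENNReal.ofReal_mul (wG_pos d _).le]
  · intro k _
    have h2 := wG_pos d (X - U k)
    have h3 := wG_pos d (Y + W k)
    positivity

lemma wl_upper_q {d : ℕ} (Φ : SchwartzMap (PhS d) ℂ) (D : ℝ) (hD : 0 < D)
    (H : ∀ U W X Y, ‖symplSTFT d Φ (wT U W) X Y‖ ≤ D * (wG d (X - U) * wG d (Y + W)))
    (p q : ℝ≥0∞) (hp : 1 ≤ p) (hq : 1 ≤ q) (n : ℕ) (U W : ℕ → PhS d)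
    (hs : ∀ Y, ∑ k ∈ Finset.range n, wg d (Y + W k) ≤ 2) :
    modNorm d p q (fun _ => 1) Φ (wS n U W) ≤
      (ENNReal.ofReal D * 2 * wA d ^ rcp p * wA d ^ rcp q) * (n : ℝ≥0∞) ^ rcp q := by
  have hA := wA_ne_top d
  have hAp : wA d ^ rcp p ≠ ∞ := ENNReal.rpow_ne_top_of_nonneg (rcp_nonneg p) hA
  have inner : ∀ Y, lpNormENN volume p (fun X => ENNReal.ofReal (‖symplSTFT d Φ (wS n U W) X Y‖ * 1)) ≤
      (ENNReal.ofReal D * ∑ k ∈ Finset.range n, wg d (Y + W k)) * wA d ^ rcp p := by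
    intro Y
    apply wl_lp_upper volume p hp
    · exact ENNReal.mul_ne_top ENNReal.ofReal_ne_top
        (ne_top_of_le_ne_top (by norm_num) (hs Y))
    · intro X
      refine (wl_V_bound Φ D hD H n U W X Y).trans ?_
      gcongr with k _
      calc _ ≤ 1 * wg d (Y + W k) := by gcongr; exact wg_le_one _ _
        _ = _ := one_mul _
    · refine (lintegral_mono fun X => wl_V_bound Φ D hD H n U W X Y).trans ?_
      rw [lintegral_const_mul' _ _ ENNReal.ofReal_ne_top, lintegral_finsetSum, mul_assoc, Finset.sum_mul]
      · gcongr with k _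
        rw [lintegral_mul_const _ (wg_sub_meas _), wA_sub, mul_comm]
      · intro k _
        exact (wg_sub_meas _).mul_const _
  unfold modNorm
  have outer := wl_lp_upper volume q hq (fun Y => lpNormENN volume p
      (fun X => ENNReal.ofReal (‖symplSTFT d Φ (wS n U W) X Y‖ * 1)))
      (ENNReal.ofReal D * 2 * wA d ^ rcp p) (n * wA d)
      (ENNReal.mul_ne_top (ENNReal.mul_ne_top ENNReal.ofReal_ne_top (by norm_num)) hAp)
      (fun Y => (inner Y).trans (by gcongr; exact hs Y)) (by
        refine (lintegral_mono inner).trans ?_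
        rw [lintegral_mul_const' _ _ hAp, lintegral_const_mul' _ _ ENNReal.ofReal_ne_top,
          lintegral_finsetSum _ fun k _ => wg_add_meas _]
        simp_rw [wA_add]
        rw [Finset.sum_const, Finset.card_range, nsmul_eq_mul]
        calc _ = ENNReal.ofReal D * 1 * wA d ^ rcp p * (n * wA d) := by ring
          _ ≤ _ := by gcongr; norm_num)
  refine outer.trans ?_
  rw [ENNReal.mul_rpow_of_nonneg _ _ (rcp_nonneg q)]
  apply le_of_eq
  ring

lemma wl_upper_p {d : ℕ} (Φ : SchwartzMap (PhS d) ℂ) (D : ℝ) (hD : 0 < D)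
    (H : ∀ U W X Y, ‖symplSTFT d Φ (wT U W) X Y‖ ≤ D * (wG d (X - U) * wG d (Y + W)))
    (p q : ℝ≥0∞) (hp : 1 ≤ p) (hq : 1 ≤ q) (n : ℕ) (U : ℕ → PhS d)
    (hs : ∀ X, ∑ k ∈ Finset.range n, wg d (X - U k) ≤ 2) :
    modNorm d p q (fun _ => 1) Φ (wS n U (fun _ => 0)) ≤
      (ENNReal.ofReal D * 2 * wA d ^ rcp p * wA d ^ rcp q) * (n : ℝ≥0∞) ^ rcp p := by
  have hA := wA_ne_top d
  have hnA : (n : ℝ≥0∞) * wA d ≠ ∞ := ENNReal.mul_ne_top (ENNReal.natCast_ne_top n) hA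
  have hAp : (n * wA d) ^ rcp p ≠ ∞ := ENNReal.rpow_ne_top_of_nonneg (rcp_nonneg p) hnA
  have hg : ∀ Y : PhS d, wg d Y ≠ ∞ := fun Y => ENNReal.ofReal_ne_top
  have bd : ∀ X Y, ENNReal.ofReal (‖symplSTFT d Φ (wS n U (fun _ => 0)) X Y‖ * 1) ≤
      ENNReal.ofReal D * wg d Y * ∑ k ∈ Finset.range n, wg d (X - U k) := by
    intro X Y
    refine (wl_V_bound Φ D hD H n U (fun _ => 0) X Y).trans ?_
    rw [← Finset.sum_mul, add_zero]
    apply le_of_eq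
    ring
  have inner : ∀ Y, lpNormENN volume p
      (fun X => ENNReal.ofReal (‖symplSTFT d Φ (wS n U (fun _ => 0)) X Y‖ * 1)) ≤
      (ENNReal.ofReal D * wg d Y * 2) * (n * wA d) ^ rcp p := by
    intro Y
    apply wl_lp_upper volume p hp
    · exact ENNReal.mul_ne_top (ENNReal.mul_ne_top ENNReal.ofReal_ne_top (hg Y)) (by norm_num)
    · intro X
      refine (bd X Y).trans ?_
      gcongr
      exact hs X
    · refine (lintegral_mono fun X => bd X Y).trans ?_
      rw [lintegral_const_mul' _ _ (ENNReal.mul_ne_top ENNReal.ofReal_ne_top (hg Y)),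
        lintegral_finsetSum _ fun k _ => wg_sub_meas _]
      simp_rw [wA_sub]
      rw [Finset.sum_const, Finset.card_range, nsmul_eq_mul]
      calc _ = ENNReal.ofReal D * wg d Y * 1 * (n * wA d) := by ring
        _ ≤ _ := by gcongr; norm_num
  unfold modNorm
  have outer := wl_lp_upper volume q hq (fun Y => lpNormENN volume p
      (fun X => ENNReal.ofReal (‖symplSTFT d Φ (wS n U (fun _ => 0)) X Y‖ * 1)))
      (ENNReal.ofReal D * 2 * (n * wA d) ^ rcp p) (wA d)
      (ENNReal.mul_ne_top (ENNReal.mul_ne_top ENNReal.ofReal_ne_top (by norm_num)) hAp)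
      (fun Y => (inner Y).trans (by
        calc _ = ENNReal.ofReal D * 2 * (n * wA d) ^ rcp p * wg d Y := by ring
          _ ≤ ENNReal.ofReal D * 2 * (n * wA d) ^ rcp p * 1 := by gcongr; exact wg_le_one d Y
          _ = _ := mul_one _)) (by
        refine (lintegral_mono inner).trans ?_
        have e : ∀ Y, (ENNReal.ofReal D * wg d Y * 2) * (n * wA d) ^ rcp p =
          (ENNReal.ofReal D * 2 * (n * wA d) ^ rcp p) * wg d Y := fun Y => by ring
        simp_rw [e]
        rw [lintegral_const_mul _ (wg_meas d)]
        rfl)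
  refine outer.trans ?_
  rw [ENNReal.mul_rpow_of_nonneg _ _ (rcp_nonneg p)]
  apply le_of_eq
  ring
end

open MeasureTheory Filter
open scoped ENNReal RealInnerProductSpace BigOperators
noncomputable section

/-- shifted balls -/
def wB {d : ℕ} (Y0 : PhS d) (ρ : ℝ) (W : PhS d) : Set (PhS d) := {Y | Y + W ∈ Metric.ball Y0 ρ}

lemma wB_meas {d : ℕ} (Y0 : PhS d) (ρ : ℝ) (W : PhS d) : MeasurableSet (wB Y0 ρ W) :=
  (measurable_id.add_const W) measurableSet_ball

lemma wB_vol {d : ℕ} (Y0 : PhS d) (ρ : ℝ) (W : PhS d) :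
    volume (wB Y0 ρ W) = volume (Metric.ball Y0 ρ) :=
  measure_preimage_add_right volume W (Metric.ball Y0 ρ)

lemma wB_disj {d : ℕ} (Y0 : PhS d) (ρ : ℝ) (W W' : PhS d) (h : 2 * ρ ≤ ‖W - W'‖) :
    Disjoint (wB Y0 ρ W) (wB Y0 ρ W') := by
  rw [Set.disjoint_left]
  intro Y h1 h2
  have h1' : dist (Y + W) Y0 < ρ := h1
  have h2' : dist (Y + W') Y0 < ρ := h2
  have h3 := dist_triangle_right (Y + W) (Y + W') Y0
  rw [dist_eq_norm (Y + W), show Y + W - (Y + W') = W - W' by abel] at h3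
  linarith

lemma wB_union {d : ℕ} (Y0 : PhS d) (ρ : ℝ) (n : ℕ) (W : ℕ → PhS d)
    (h : ∀ k j, k ≠ j → 2 * ρ ≤ ‖W k - W j‖) :
    volume (⋃ k ∈ Finset.range n, wB Y0 ρ (W k)) = n * volume (Metric.ball Y0 ρ) := by
  rw [measure_biUnion_finset]
  · simp_rw [wB_vol]
    rw [Finset.sum_const, Finset.card_range, nsmul_eq_mul]
  · intro k _ j _ hkj
    exact wB_disj _ _ _ _ (h k j hkj)
  · intro k _
    exact wB_meas _ _ _

lemma wl_lower_q {d : ℕ} (Φ : SchwartzMap (PhS d) ℂ) (p q : ℝ≥0∞) (hp : 1 ≤ p) (hq : 1 ≤ q)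
    (n : ℕ) (hn : 1 ≤ n) (U W : ℕ → PhS d) (X0 Y0 : PhS d) (ρ : ℝ) (hρ : 0 < ρ)
    (hsep : ∀ k j, k ≠ j → k < n → j < n → 2 * ρ ≤ ‖W k - W j‖) (G : PhS d → ℂ) (m : ℝ)
    (hm : ∀ k < n, ∀ X Y, X - U k ∈ Metric.ball X0 ρ → Y + W k ∈ Metric.ball Y0 ρ →
      m ≤ ‖symplSTFT d Φ G X Y‖) :
    (ENNReal.ofReal m * volume (Metric.ball X0 ρ) ^ rcp p * volume (Metric.ball Y0 ρ) ^ rcp q) *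
      (n : ℝ≥0∞) ^ rcp q ≤ modNorm d p q (fun _ => 1) Φ G := by
  have hb1 : volume (Metric.ball X0 ρ) ≠ 0 := (Metric.measure_ball_pos _ _ hρ).ne'
  have hb2 : volume (Metric.ball Y0 ρ) ≠ 0 := (Metric.measure_ball_pos _ _ hρ).ne'
  have hu : volume (⋃ k ∈ Finset.range n, wB Y0 ρ (W k)) = n * volume (Metric.ball Y0 ρ) := by
    rw [measure_biUnion_finset]
    · simp_rw [wB_vol]
      rw [Finset.sum_const, Finset.card_range, nsmul_eq_mul]
    · intro k hk j hj hkj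
      exact wB_disj _ _ _ _ (hsep k j hkj (by simpa using hk) (by simpa using hj))
    · intro k _
      exact wB_meas _ _ _
  have h := wl_lp_lower volume q hq (fun Y => lpNormENN volume p
      (fun X => ENNReal.ofReal (‖symplSTFT d Φ G X Y‖ * 1)))
      (ENNReal.ofReal m * volume (Metric.ball X0 ρ) ^ rcp p)
      (⋃ k ∈ Finset.range n, wB Y0 ρ (W k)) (Finset.measurableSet_biUnion _ fun k _ => wB_meas _ _ _)
      (by
        rw [hu]
        apply mul_ne_zero _ hb2
        exact_mod_cast (by omega : n ≠ 0))
      (by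
        intro Y hY
        simp only [Set.mem_iUnion, Finset.mem_range] at hY
        obtain ⟨k, hk, hY⟩ := hY
        have h1 := wl_lp_lower volume p hp (fun X => ENNReal.ofReal (‖symplSTFT d Φ G X Y‖ * 1))
          (ENNReal.ofReal m) (wB X0 ρ (-U k)) (wB_meas _ _ _) (by rw [wB_vol]; exact hb1) (by
            intro X hX
            apply ENNReal.ofReal_le_ofReal
            rw [mul_one]
            refine hm k hk X Y ?_ hY
            rw [sub_eq_add_neg]; exact hX)
        rwa [wB_vol] at h1)
  refine le_trans (le_of_eq ?_) h
  rw [hu, ENNReal.mul_rpow_of_nonneg _ _ (rcp_nonneg q)]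
  ring

lemma wl_lower_p {d : ℕ} (Φ : SchwartzMap (PhS d) ℂ) (p q : ℝ≥0∞) (hp : 1 ≤ p) (hq : 1 ≤ q)
    (n : ℕ) (hn : 1 ≤ n) (U : ℕ → PhS d) (X0 Y0 : PhS d) (ρ : ℝ) (hρ : 0 < ρ)
    (hsep : ∀ k j, k ≠ j → k < n → j < n → 2 * ρ ≤ ‖U k - U j‖) (G : PhS d → ℂ) (m : ℝ)
    (hm : ∀ k < n, ∀ X Y, X - U k ∈ Metric.ball X0 ρ → Y + 0 ∈ Metric.ball Y0 ρ →
      m ≤ ‖symplSTFT d Φ G X Y‖) :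
    (ENNReal.ofReal m * volume (Metric.ball X0 ρ) ^ rcp p * volume (Metric.ball Y0 ρ) ^ rcp q) *
      (n : ℝ≥0∞) ^ rcp p ≤ modNorm d p q (fun _ => 1) Φ G := by
  have hb1 : volume (Metric.ball X0 ρ) ≠ 0 := (Metric.measure_ball_pos _ _ hρ).ne'
  have hb2 : volume (Metric.ball Y0 ρ) ≠ 0 := (Metric.measure_ball_pos _ _ hρ).ne'
  have hu : volume (⋃ k ∈ Finset.range n, wB X0 ρ (-U k)) = n * volume (Metric.ball X0 ρ) := by
    rw [measure_biUnion_finset]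
    · simp_rw [wB_vol]
      rw [Finset.sum_const, Finset.card_range, nsmul_eq_mul]
    · intro k hk j hj hkj
      apply wB_disj _ _ _ _
      have := hsep k j hkj (by simpa using hk) (by simpa using hj)
      rw [show -U k - -U j = -(U k - U j) by abel, norm_neg]
      exact this
    · intro k _
      exact wB_meas _ _ _
  have h := wl_lp_lower volume q hq (fun Y => lpNormENN volume p
      (fun X => ENNReal.ofReal (‖symplSTFT d Φ G X Y‖ * 1)))
      (ENNReal.ofReal m * (n * volume (Metric.ball X0 ρ)) ^ rcp p)
      (Metric.ball Y0 ρ) measurableSet_ball hb2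
      (by
        intro Y hY
        have h1 := wl_lp_lower volume p hp (fun X => ENNReal.ofReal (‖symplSTFT d Φ G X Y‖ * 1))
          (ENNReal.ofReal m) (⋃ k ∈ Finset.range n, wB X0 ρ (-U k))
          (Finset.measurableSet_biUnion _ fun k _ => wB_meas _ _ _)
          (by
            rw [hu]
            apply mul_ne_zero _ hb1
            exact_mod_cast (by omega : n ≠ 0)) (by
            intro X hX
            simp only [Set.mem_iUnion, Finset.mem_range] at hX
            obtain ⟨k, hk, hX⟩ := hX
            apply ENNReal.ofReal_le_ofReal
            rw [mul_one]
            refine hm k hk X Y ?_ (by rw [add_zero]; exact hY)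
            rw [sub_eq_add_neg]; exact hX)
        rwa [hu] at h1)
  refine le_trans (le_of_eq ?_) h
  rw [ENNReal.mul_rpow_of_nonneg _ _ (rcp_nonneg p)]
  ring

lemma wl_point {d : ℕ} (Φ : SchwartzMap (PhS d) ℂ) (D δ K c η ε : ℝ)
    (hD : 0 < D) (hc : 0 < c) (hη0 : 0 ≤ η) (hε : 0 ≤ ε)
    (H1 : ∀ U W X Y, ‖symplSTFT d Φ (wT U W) X Y‖ ≤ D * (wG d (X - U) * wG d (Y + W)))
    (H3 : ∀ (f : PhS d → ℂ) (M : ℝ), 0 ≤ M → (∀ x, ‖f x‖ ≤ M) →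
        ∀ X Y, ‖symplSTFT d Φ f X Y‖ ≤ K * M)
    (n : ℕ) (U W : ℕ → PhS d) (G err : PhS d → ℂ)
    (hG : ∀ X, G X = (c : ℂ) * wS n U W X + err X) (herr : wCB err) (hb : ∀ X, ‖err X‖ ≤ ε)
    (k0 : ℕ) (hk0 : k0 < n) (X Y : PhS d) (hδ : δ ≤ ‖symplSTFT d Φ (wT (U k0) (W k0)) X Y‖)
    (hη : ∀ k, k ≠ k0 → k < n → wG d (X - U k) * wG d (Y + W k) ≤ η)
    (hs1 : n * (D * η) ≤ δ / 2) (hs2 : K * ε ≤ c * δ / 4) :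
    c * δ / 4 ≤ ‖symplSTFT d Φ G X Y‖ := by
  have hG' : G = fun X => (c : ℂ) * wS n U W X + err X := funext hG
  rw [hG', wl_V_add Φ (wCB_smul _ (wCB_schwartz _)) herr, wl_V_smul, wl_V_wS]
  have h1 := H3 err ε hε hb X Y
  rw [← Finset.add_sum_erase _ _ (Finset.mem_range.mpr hk0)]
  set t := symplSTFT d Φ (wT (U k0) (W k0)) X Y
  set s := ∑ k ∈ (Finset.range n).erase k0, symplSTFT d Φ (wT (U k) (W k)) X Y with hs
  set e := symplSTFT d Φ err X Y
  have h2 : ‖s‖ ≤ n * (D * η) := by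
    calc ‖s‖ ≤ ∑ k ∈ (Finset.range n).erase k0, D * η := by
          refine (norm_sum_le _ _).trans (Finset.sum_le_sum fun k hk => ?_)
          rw [Finset.mem_erase, Finset.mem_range] at hk
          refine (H1 _ _ _ _).trans ?_
          gcongr
          exact hη k hk.1 hk.2
      _ ≤ ∑ k ∈ (Finset.range n), D * η := by
          apply Finset.sum_le_sum_of_subset_of_nonneg (Finset.erase_subset _ _)
          intros; positivity
      _ = _ := by rw [Finset.sum_const, Finset.card_range, nsmul_eq_mul]
  have h3 : c * (δ / 2) ≤ ‖(c : ℂ) * (t + s)‖ := by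
    rw [norm_mul, Complex.norm_real, Real.norm_of_nonneg hc.le]
    gcongr
    have := norm_sub_le (t + s) s
    rw [add_sub_cancel_right] at this
    linarith
  have h4 := norm_sub_le ((c : ℂ) * (t + s) + e) e
  rw [add_sub_cancel_right] at h4
  linarith
end

open MeasureTheory Filter
open scoped ENNReal RealInnerProductSpace BigOperators
noncomputable section

lemma wl_unit (d : ℕ) (hd : 1 ≤ d) : ∃ v : PhS d, ‖v‖ = 1 := by
  refine ⟨(EuclideanSpace.single ⟨0, hd⟩ 1, 0), ?_⟩
  simp [Prod.norm_def]

def ww {d : ℕ} (v : PhS d) (R : ℝ) (k : ℕ) : PhS d := ((k : ℝ) * R) • v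

lemma ww_sep {d : ℕ} (v : PhS d) (hv : ‖v‖ = 1) (R : ℝ) (hR : 0 ≤ R) (k j : ℕ) (h : k ≠ j) :
    R ≤ ‖ww v R k - ww v R j‖ := by
  unfold ww
  rw [← sub_smul, norm_smul, hv, mul_one, ← sub_mul, norm_mul, Real.norm_of_nonneg hR]
  have : (1 : ℝ) ≤ ‖(k : ℝ) - j‖ := by
    have h1 : (1 : ℤ) ≤ |(k : ℤ) - j| := Int.one_le_abs (by omega)
    have h2 : ((1 : ℤ) : ℝ) ≤ ((|(k : ℤ) - j| : ℤ) : ℝ) := by exact_mod_cast h1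
    rw [Real.norm_eq_abs]
    push_cast at h2
    exact h2
  nlinarith

lemma ww_sf {d : ℕ} (v : PhS d) (R : ℝ) (k j : ℕ) : symplForm (ww v R k) (ww v R j) = 0 := by
  unfold ww
  rw [sf_smul_left, sf_smul_right, sf_self]; simp

lemma wl_far {d : ℕ} (Z0 a b : PhS d) (ρ R : ℝ) (hR0 : 0 ≤ R) (ha : a ∈ Metric.ball Z0 ρ) (h : R ≤ ‖b - a‖)
    (hR : 2 * (ρ + ‖Z0‖) ≤ R) : wG d b ≤ (1 + R / 2)⁻¹ := by
  apply wG_le d b (R / 2) (by positivity)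
  have h1 : ‖a‖ ≤ ρ + ‖Z0‖ := by
    have h2 : ‖a - Z0‖ < ρ := by rwa [mem_ball_iff_norm] at ha
    have h3 := norm_add_le (a - Z0) Z0
    rw [sub_add_cancel] at h3
    linarith
  have := norm_sub_le b a
  linarith

lemma wl_R (D δ ρ K c x y : ℝ) (hD : 0 < D) (hδ : 0 < δ) (hρ : 0 < ρ) (hK : 0 < K) (hc : 0 < c)
    (hx : 0 ≤ x) (hy : 0 ≤ y) (N : ℕ) :
    ∃ R : ℝ, 0 ≤ R ∧ 2 * (N : ℝ) ≤ R ∧ 2 * ρ ≤ R ∧ 2 * (ρ + x) ≤ R ∧ 2 * (ρ + y) ≤ R ∧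
      N * (D * (1 + R / 2)⁻¹) ≤ δ / 2 ∧ K * ((N : ℝ) ^ 2 * (1 + R ^ 2 / 4)⁻¹) ≤ c * δ / 4 := by
  have hN : (0 : ℝ) ≤ N := Nat.cast_nonneg N
  have e1 : 0 ≤ 4 * N * D / δ := by positivity
  have e2 : 0 ≤ 4 * K * N ^ 2 / (c * δ) := by positivity
  refine ⟨2 * N + 2 * (ρ + x) + 2 * (ρ + y) + 4 * N * D / δ + 4 * K * N ^ 2 / (c * δ), by positivity,
    by linarith, by linarith, by linarith, by linarith, ?_, ?_⟩
  · set R := 2 * N + 2 * (ρ + x) + 2 * (ρ + y) + 4 * N * D / δ + 4 * K * N ^ 2 / (c * δ) with hR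
    have h : 4 * N * D / δ ≤ R := by linarith
    have hR0 : 0 ≤ R := by linarith
    rw [div_le_iff₀ hδ] at h
    rw [← mul_assoc, mul_inv_le_iff₀ (by positivity)]
    nlinarith
  · set R := 2 * N + 2 * (ρ + x) + 2 * (ρ + y) + 4 * N * D / δ + 4 * K * N ^ 2 / (c * δ) with hR
    have h : 4 * K * N ^ 2 / (c * δ) ≤ R := by linarith
    rw [div_le_iff₀ (by positivity)] at h
    rw [← mul_assoc, mul_inv_le_iff₀ (by positivity)]
    have h3 : R ≤ 1 + R ^ 2 / 4 := by nlinarith [sq_nonneg (1 - R / 2)]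
    have h4 : R * (c * δ) ≤ (1 + R ^ 2 / 4) * (c * δ) := by gcongr
    linarith

lemma wl_split {d : ℕ} (n : ℕ) (U1 W1 U2 W2 : ℕ → PhS d) (R : ℝ) (hR0 : 0 ≤ R)
    (hR : ∀ k j, k ≠ j → R ≤ ‖W1 k + W2 j + U2 j - U1 k‖) :
    ∃ err : PhS d → ℂ, wCB err ∧ (∀ X, ‖err X‖ ≤ (n : ℝ) ^ 2 * (1 + R ^ 2 / 4)⁻¹) ∧
      ∀ X, weylProd d (wS n U1 W1) (wS n U2 W2) X =
        ∑ k ∈ Finset.range n, weylProd d (wT (U1 k) (W1 k)) (wT (U2 k) (W2 k)) X + err X := by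
  refine ⟨fun X => ∑ k ∈ Finset.range n, ∑ j ∈ (Finset.range n).erase k,
    weylProd d (wT (U1 k) (W1 k)) (wT (U2 j) (W2 j)) X, ?_, fun X => ?_, fun X => ?_⟩
  · exact wCB_sum _ (fun k X => ∑ j ∈ (Finset.range n).erase k,
      weylProd d (wT (U1 k) (W1 k)) (wT (U2 j) (W2 j)) X) fun k _ =>
      wCB_sum _ (fun j X => weylProd d (wT (U1 k) (W1 k)) (wT (U2 j) (W2 j)) X) fun j _ => wCB_weyl _ _ _ _
  · have hin : ∀ k ∈ Finset.range n, ‖∑ j ∈ (Finset.range n).erase k,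
        weylProd d (wT (U1 k) (W1 k)) (wT (U2 j) (W2 j)) X‖ ≤ n * (1 + R ^ 2 / 4)⁻¹ := by
      intro k hk
      refine (norm_sum_le_of_le (f := fun j => weylProd d (wT (U1 k) (W1 k)) (wT (U2 j) (W2 j)) X)
        (n := fun _ => (1 + R ^ 2 / 4)⁻¹) _ fun j hj => ?_).trans ?_
      · refine (weylProd_off _ _ _ _ X).trans ?_
        have := hR k j (Finset.ne_of_mem_erase hj).symm
        gcongr
      · rw [Finset.sum_const, nsmul_eq_mul]
        gcongr
        refine (Finset.card_erase_le).trans (by simp)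
    refine (norm_sum_le_of_le _ hin).trans ?_
    rw [Finset.sum_const, nsmul_eq_mul, Finset.card_range]
    apply le_of_eq; ring
  · rw [weylProd_sum, ← Finset.sum_add_distrib]
    exact Finset.sum_congr rfl fun k hk => (Finset.add_sum_erase _ _ hk).symm

lemma wl_c1 {d : ℕ} (X0 Y0 : PhS d) (ρ : ℝ) (hρ : 0 < ρ) (p q : ℝ≥0∞) (m : ℝ) (hm : 0 < m) :
    ENNReal.ofReal m * volume (Metric.ball X0 ρ) ^ rcp p * volume (Metric.ball Y0 ρ) ^ rcp q ≠ 0 := by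
  have h : ∀ (Z : PhS d) (s : ℝ), 0 ≤ s → volume (Metric.ball Z ρ) ^ s ≠ 0 := fun Z s hs =>
    (ENNReal.rpow_pos (Metric.measure_ball_pos _ _ hρ) measure_ball_lt_top.ne).ne'
  refine mul_ne_zero (mul_ne_zero ?_ (h _ _ (rcp_nonneg _))) (h _ _ (rcp_nonneg _))
  simpa using hm

lemma wl_c2 (d : ℕ) (D : ℝ) (p q : ℝ≥0∞) :
    ENNReal.ofReal D * 2 * wA d ^ rcp p * wA d ^ rcp q ≠ ∞ := by
  have h : ∀ p, wA d ^ rcp p ≠ ∞ := fun p => ENNReal.rpow_ne_top_of_nonneg (rcp_nonneg p) (wA_ne_top d)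
  exact ENNReal.mul_ne_top (ENNReal.mul_ne_top (ENNReal.mul_ne_top ENNReal.ofReal_ne_top (by norm_num)) (h p)) (h q)

lemma wl_one_sum {d : ℕ} (z : ℕ → PhS d) : ∑ k ∈ Finset.range 1, wg d (z k) ≤ 2 := by
  simp only [Finset.range_one, Finset.sum_singleton]
  exact (wg_le_one d _).trans (by norm_num)

/-- weights in `q`, factor one or two against the output -/
lemma wl_test_q {d : ℕ} (hd : 1 ≤ d) (Φ : SchwartzMap (PhS d) ℂ) (hΦ : Φ ≠ 0) (C : ℝ)
    (P Q p1 q1 p2 q2 : ℝ≥0∞) (hP : 1 ≤ P) (hQ : 1 ≤ Q) (hp1 : 1 ≤ p1) (hq1 : 1 ≤ q1)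
    (hp2 : 1 ≤ p2) (hq2 : 1 ≤ q2)
    (hb : ∀ a b : SchwartzMap (PhS d) ℂ,
      modNorm d P Q (fun _ => 1) Φ (weylProd d a b) ≤
        ENNReal.ofReal C * modNorm d p1 q1 (fun _ => 1) Φ a * modNorm d p2 q2 (fun _ => 1) Φ b) :
    rcp Q ≤ rcp q1 ∧ rcp Q ≤ rcp q2 := by
  obtain ⟨v, hv⟩ := wl_unit d hd
  obtain ⟨D, δ, ρ, K, X0, Y0, hD, hδ, hρ, hK, H1, H2, H3⟩ := wl_consts Φ hΦ
  have hc : (0 : ℝ) < (2 ^ d)⁻¹ := by positivity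
  have hc1 := wl_c1 X0 Y0 ρ hρ P Q ((2 ^ d)⁻¹ * δ / 4) (by positivity)
  -- common lower bound
  have low : ∀ N : ℕ, 1 ≤ N → ∀ R : ℝ, 0 ≤ R → 2 * ρ ≤ R → 2 * (ρ + ‖Y0‖) ≤ R →
      N * (D * (1 + R / 2)⁻¹) ≤ δ / 2 → ∀ U : ℕ → PhS d, ∀ G : PhS d → ℂ,
      (∀ X, G X = (((2 ^ d)⁻¹ : ℝ) : ℂ) * wS N U (ww v R) X) →
      (ENNReal.ofReal ((2 ^ d)⁻¹ * δ / 4) * volume (Metric.ball X0 ρ) ^ rcp P *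
        volume (Metric.ball Y0 ρ) ^ rcp Q) * (N : ℝ≥0∞) ^ rcp Q ≤ modNorm d P Q (fun _ => 1) Φ G := by
    intro N hN R hR0 hR1 hR2 hR3 U G hG
    apply wl_lower_q Φ P Q hP hQ N hN U (ww v R) X0 Y0 ρ hρ
      (fun k j hkj _ _ => hR1.trans (ww_sep v hv R hR0 k j hkj))
    intro k hk X Y hX hY
    refine wl_point Φ D δ K _ (1 + R / 2)⁻¹ 0 hD hc (by positivity) le_rfl H1 H3 N U (ww v R) G
      (fun _ => 0) (fun X => by rw [hG, add_zero]) wCB_zero (fun X => by simp) k hk X Y (H2 _ _ _ _ hX hY)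
      ?_ hR3 (by rw [mul_zero]; positivity)
    intro j hj _
    have h1 : wG d (Y + ww v R j) ≤ (1 + R / 2)⁻¹ := by
      refine wl_far Y0 _ _ ρ R hR0 hY ?_ hR2
      rw [add_sub_add_left_eq_sub]
      exact ww_sep v hv R hR0 j k hj
    calc _ ≤ 1 * wG d (Y + ww v R j) := by
          gcongr
          · exact (wG_pos d _).le
          · exact wG_le_one d _
      _ ≤ _ := by rwa [one_mul]
  have up1 : ∀ N : ℕ, ∀ R : ℝ, 0 ≤ R → 2 * (N : ℝ) ≤ R → ∀ Y : PhS d,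
      ∑ k ∈ Finset.range N, wg d (Y + ww v R k) ≤ 2 := by
    intro N R hR0 hR Y
    have := wl_sep N (fun k => - ww v R k) R hR (fun k j hkj => by
      rw [neg_sub_neg]; exact ww_sep v hv R hR0 j k hkj.symm) Y
    simpa only [sub_neg_eq_add] using this
  constructor
  · refine wl_exponent _ ((ENNReal.ofReal C * (ENNReal.ofReal D * 2 * wA d ^ rcp p1 * wA d ^ rcp q1)) *
      (ENNReal.ofReal D * 2 * wA d ^ rcp p2 * wA d ^ rcp q2)) hc1
      (ENNReal.mul_ne_top (ENNReal.mul_ne_top ENNReal.ofReal_ne_top (wl_c2 d D p1 q1)) (wl_c2 d D p2 q2)) _ _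
      fun N hN => ?_
    obtain ⟨R, hR0, hRN, hR1, hRx, hRy, hR3, hR4⟩ := wl_R D δ ρ K _ ‖X0‖ ‖Y0‖ hD hδ hρ hK hc (norm_nonneg _)
      (norm_nonneg _) N
    have h1 := low N hN R hR0 hR1 hRy hR3 (ww v R)
      (weylProd d (wS N (ww v R) (ww v R)) (wS 1 (fun _ => 0) (fun _ => 0))) (fun X => by
        rw [weylProd_sum, wS_apply, Finset.mul_sum]
        refine Finset.sum_congr rfl fun k _ => ?_
        rw [Finset.range_one, Finset.sum_singleton, weylProd_diag _ _ _ _ (by simp) (by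
          simp [symplForm]), sub_zero, add_zero]
        push_cast; rfl)
    refine h1.trans ((hb _ _).trans ?_)
    have h2 := wl_upper_q Φ D hD H1 p1 q1 hp1 hq1 N (ww v R) (ww v R) (up1 N R hR0 hRN)
    have h3 := wl_upper_q Φ D hD H1 p2 q2 hp2 hq2 1 (fun _ => 0) (fun _ => 0) (fun Y => wl_one_sum _)
    rw [Nat.cast_one, ENNReal.one_rpow, mul_one] at h3
    refine (mul_le_mul' (mul_le_mul' le_rfl h2) h3).trans (le_of_eq ?_)
    ring
  · refine wl_exponent _ ((ENNReal.ofReal C * (ENNReal.ofReal D * 2 * wA d ^ rcp p1 * wA d ^ rcp q1)) *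
      (ENNReal.ofReal D * 2 * wA d ^ rcp p2 * wA d ^ rcp q2)) hc1
      (ENNReal.mul_ne_top (ENNReal.mul_ne_top ENNReal.ofReal_ne_top (wl_c2 d D p1 q1)) (wl_c2 d D p2 q2)) _ _
      fun N hN => ?_
    obtain ⟨R, hR0, hRN, hR1, hRx, hRy, hR3, hR4⟩ := wl_R D δ ρ K _ ‖X0‖ ‖Y0‖ hD hδ hρ hK hc (norm_nonneg _)
      (norm_nonneg _) N
    have h1 := low N hN R hR0 hR1 hRy hR3 (fun k => - ww v R k)
      (weylProd d (wS 1 (fun _ => 0) (fun _ => 0)) (wS N (fun k => - ww v R k) (ww v R))) (fun X => by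
        rw [weylProd_sum, wS_apply, Finset.mul_sum, Finset.range_one, Finset.sum_singleton]
        refine Finset.sum_congr rfl fun k _ => ?_
        rw [weylProd_diag _ _ _ _ (by simp) (by
          simp [symplForm]), zero_sub, zero_add]
        push_cast; rfl)
    refine h1.trans ((hb _ _).trans ?_)
    have h2 := wl_upper_q Φ D hD H1 p2 q2 hp2 hq2 N (fun k => - ww v R k) (ww v R) (up1 N R hR0 hRN)
    have h3 := wl_upper_q Φ D hD H1 p1 q1 hp1 hq1 1 (fun _ => 0) (fun _ => 0) (fun Y => wl_one_sum _)
    rw [Nat.cast_one, ENNReal.one_rpow, mul_one] at h3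
    refine (mul_le_mul' (mul_le_mul' le_rfl h3) h2).trans (le_of_eq ?_)
    ring

lemma wl_test_qq {d : ℕ} (hd : 1 ≤ d) (Φ : SchwartzMap (PhS d) ℂ) (hΦ : Φ ≠ 0) (C : ℝ)
    (P Q p1 q1 p2 q2 : ℝ≥0∞) (hP : 1 ≤ P) (hQ : 1 ≤ Q) (hp1 : 1 ≤ p1) (hq1 : 1 ≤ q1)
    (hp2 : 1 ≤ p2) (hq2 : 1 ≤ q2)
    (hb : ∀ a b : SchwartzMap (PhS d) ℂ,
      modNorm d P Q (fun _ => 1) Φ (weylProd d a b) ≤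
        ENNReal.ofReal C * modNorm d p1 q1 (fun _ => 1) Φ a * modNorm d p2 q2 (fun _ => 1) Φ b) :
    1 ≤ rcp q1 + rcp q2 := by
  obtain ⟨v, hv⟩ := wl_unit d hd
  obtain ⟨D, δ, ρ, K, X0, Y0, hD, hδ, hρ, hK, H1, H2, H3⟩ := wl_consts Φ hΦ
  have hc : (0 : ℝ) < (2 ^ d)⁻¹ := by positivity
  have hc1 := wl_c1 X0 Y0 ρ hρ P Q ((2 ^ d)⁻¹ * δ / 4) (by positivity)
  refine wl_exponent _ ((ENNReal.ofReal C * (ENNReal.ofReal D * 2 * wA d ^ rcp p1 * wA d ^ rcp q1)) *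
      (ENNReal.ofReal D * 2 * wA d ^ rcp p2 * wA d ^ rcp q2)) hc1
      (ENNReal.mul_ne_top (ENNReal.mul_ne_top ENNReal.ofReal_ne_top (wl_c2 d D p1 q1)) (wl_c2 d D p2 q2)) _ _
      fun N hN => ?_
  obtain ⟨R, hR0, hRN, hR1, hRx, hRy, hR3, hR4⟩ := wl_R D δ ρ K _ ‖X0‖ ‖Y0‖ hD hδ hρ hK hc (norm_nonneg _)
      (norm_nonneg _) N
  have hN1 : (1 : ℝ) ≤ N := by exact_mod_cast hN
  set w := ww v R with hw
  obtain ⟨err, he1, he2, he3⟩ := wl_split N (fun k => - w k) w (fun k => - w k) (fun k => - w k) R hR0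
    (fun k j hkj => by
      have h := ww_sep v hv R hR0 k j hkj
      rw [show w k + - w j + - w j - - w k = (2 : ℝ) • (w k - w j) by rw [two_smul]; abel, norm_smul]
      rw [Real.norm_of_nonneg (by norm_num : (0:ℝ) ≤ 2)]
      linarith [norm_nonneg (w k - w j)])
  have hlow : (ENNReal.ofReal (((2 ^ d)⁻¹ * N) * δ / 4) * volume (Metric.ball X0 ρ) ^ rcp P *
        volume (Metric.ball Y0 ρ) ^ rcp Q) * ((1 : ℕ) : ℝ≥0∞) ^ rcp Q ≤ modNorm d P Q (fun _ => 1) Φ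
        (weylProd d (wS N (fun k => - w k) w) (wS N (fun k => - w k) (fun k => - w k))) := by
    apply wl_lower_q Φ P Q hP hQ 1 le_rfl (fun _ => 0) (fun _ => 0) X0 Y0 ρ hρ
      (fun k j hkj hk hj => by omega)
    intro k hk X Y hX hY
    refine wl_point Φ D δ K _ 0 ((N : ℝ) ^ 2 * (1 + R ^ 2 / 4)⁻¹) hD (by positivity) le_rfl (by positivity) H1 H3 1
      (fun _ => 0) (fun _ => 0) _ err (fun X => ?_) he1 he2 0 (by omega) X Y (H2 _ _ _ _ hX hY)
      (fun k hk hk' => by omega) (by simp; positivity) (hR4.trans ?_)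
    · rw [he3, wS_apply, Finset.range_one, Finset.sum_singleton]
      congr 1
      rw [Finset.sum_congr rfl fun k _ => weylProd_diag (- w k) (w k) (- w k) (- w k) (by abel) (by
        rw [sf_neg_left, sf_self]; simp) X]
      simp only [sub_self, add_neg_cancel, Finset.sum_const, Finset.card_range, nsmul_eq_mul]
      push_cast; ring
    · have : (2 ^ d : ℝ)⁻¹ * 1 ≤ (2 ^ d)⁻¹ * N := by gcongr
      rw [mul_one] at this
      gcongr
  have e : ENNReal.ofReal (((2 ^ d)⁻¹ * N) * δ / 4) = ENNReal.ofReal ((2 ^ d)⁻¹ * δ / 4) * (N : ℝ≥0∞) := by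
    rw [← ENNReal.ofReal_natCast N, ← ENNReal.ofReal_mul (by positivity)]
    congr 1; ring
  rw [e, Nat.cast_one, ENNReal.one_rpow, mul_one] at hlow
  have hs := ww_sep v hv R hR0
  have h2 := wl_upper_q Φ D hD H1 p1 q1 hp1 hq1 N (fun k => - w k) w (fun Y => by
    have := wl_sep N (fun k => - w k) R hRN (fun k j hkj => by
      rw [neg_sub_neg]; exact hs j k hkj.symm) Y
    simpa only [sub_neg_eq_add] using this)
  have h3 := wl_upper_q Φ D hD H1 p2 q2 hp2 hq2 N (fun k => - w k) (fun k => - w k) (fun Y => by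
    have := wl_sep N w R hRN hs Y
    simpa only [sub_eq_add_neg] using this)
  rw [ENNReal.rpow_one, ENNReal.rpow_add _ _ (by simp; omega) (ENNReal.natCast_ne_top N)]
  calc _ = _ := by ring
    _ ≤ _ := hlow
    _ ≤ _ := hb _ _
    _ ≤ _ := mul_le_mul' (mul_le_mul' le_rfl h2) h3
    _ = _ := by ring

lemma wl_test_p {d : ℕ} (hd : 1 ≤ d) (Φ : SchwartzMap (PhS d) ℂ) (hΦ : Φ ≠ 0) (C : ℝ)
    (P Q p1 q1 p2 q2 : ℝ≥0∞) (hP : 1 ≤ P) (hQ : 1 ≤ Q) (hp1 : 1 ≤ p1) (hq1 : 1 ≤ q1)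
    (hp2 : 1 ≤ p2) (hq2 : 1 ≤ q2)
    (hb : ∀ a b : SchwartzMap (PhS d) ℂ,
      modNorm d P Q (fun _ => 1) Φ (weylProd d a b) ≤
        ENNReal.ofReal C * modNorm d p1 q1 (fun _ => 1) Φ a * modNorm d p2 q2 (fun _ => 1) Φ b) :
    rcp P ≤ rcp p1 + rcp p2 := by
  obtain ⟨v, hv⟩ := wl_unit d hd
  obtain ⟨D, δ, ρ, K, X0, Y0, hD, hδ, hρ, hK, H1, H2, H3⟩ := wl_consts Φ hΦ
  have hc : (0 : ℝ) < (2 ^ d)⁻¹ := by positivity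
  have hc1 := wl_c1 X0 Y0 ρ hρ P Q ((2 ^ d)⁻¹ * δ / 4) (by positivity)
  refine wl_exponent _ ((ENNReal.ofReal C * (ENNReal.ofReal D * 2 * wA d ^ rcp p1 * wA d ^ rcp q1)) *
      (ENNReal.ofReal D * 2 * wA d ^ rcp p2 * wA d ^ rcp q2)) hc1
      (ENNReal.mul_ne_top (ENNReal.mul_ne_top ENNReal.ofReal_ne_top (wl_c2 d D p1 q1)) (wl_c2 d D p2 q2)) _ _
      fun N hN => ?_
  obtain ⟨R, hR0, hRN, hR1, hRx, hRy, hR3, hR4⟩ := wl_R D δ ρ K _ ‖X0‖ ‖Y0‖ hD hδ hρ hK hc (norm_nonneg _)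
      (norm_nonneg _) N
  have hs := ww_sep v hv R hR0
  set w := ww v R with hw
  obtain ⟨err, he1, he2, he3⟩ := wl_split N w (fun _ => 0) w (fun _ => 0) R hR0
    (fun k j hkj => by
      rw [add_zero, zero_add]
      exact hs j k hkj.symm)
  have hlow : (ENNReal.ofReal ((2 ^ d)⁻¹ * δ / 4) * volume (Metric.ball X0 ρ) ^ rcp P *
        volume (Metric.ball Y0 ρ) ^ rcp Q) * (N : ℝ≥0∞) ^ rcp P ≤ modNorm d P Q (fun _ => 1) Φ
        (weylProd d (wS N w (fun _ => 0)) (wS N w (fun _ => 0))) := by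
    apply wl_lower_p Φ P Q hP hQ N hN w X0 Y0 ρ hρ
      (fun k j hkj _ _ => hR1.trans (hs k j hkj))
    intro k hk X Y hX hY
    refine wl_point Φ D δ K _ (1 + R / 2)⁻¹ ((N : ℝ) ^ 2 * (1 + R ^ 2 / 4)⁻¹) hD hc (by positivity)
      (by positivity) H1 H3 N
      w (fun _ => 0) _ err (fun X => ?_) he1 he2 k hk X Y (H2 _ _ _ _ hX hY)
      ?_ hR3 hR4
    · rw [he3, wS_apply, Finset.mul_sum]
      congr 1
      refine Finset.sum_congr rfl fun k _ => ?_
      rw [weylProd_diag _ _ _ _ (by simp) (by simp [symplForm]), sub_zero, add_zero]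
      push_cast; rfl
    · intro j hj _
      have h1 : wG d (X - w j) ≤ (1 + R / 2)⁻¹ := by
        refine wl_far X0 _ _ ρ R hR0 hX ?_ hRx
        rw [sub_sub_sub_cancel_left]
        exact hs k j hj.symm
      calc _ ≤ wG d (X - w j) * 1 := by
            gcongr
            · exact (wG_pos d _).le
            · exact wG_le_one d _
        _ ≤ _ := by rwa [mul_one]
  have h2 := wl_upper_p Φ D hD H1 p1 q1 hp1 hq1 N w (wl_sep N w R hRN hs)
  have h3 := wl_upper_p Φ D hD H1 p2 q2 hp2 hq2 N w (wl_sep N w R hRN hs)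
  rw [ENNReal.rpow_add _ _ (by simp; omega) (ENNReal.natCast_ne_top N)]
  calc _ ≤ _ := hlow
    _ ≤ _ := hb _ _
    _ ≤ _ := mul_le_mul' (mul_le_mul' le_rfl h2) h3
    _ = _ := by ring

lemma wl_conj (p pc : ℝ≥0∞) (h : p⁻¹ + pc⁻¹ = 1) : 1 ≤ pc ∧ rcp pc = 1 - rcp p := by
  have h1 : pc⁻¹ ≤ 1 := h ▸ le_add_self
  have h2 : p⁻¹ ≤ 1 := h ▸ le_self_add
  refine ⟨ENNReal.inv_le_one.mp h1, ?_⟩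
  have := congrArg ENNReal.toReal h
  rw [ENNReal.toReal_add (ne_top_of_le_ne_top (by simp) h2) (ne_top_of_le_ne_top (by simp) h1), ENNReal.toReal_one] at this
  unfold rcp; linarith

end

noncomputable section

/-- Lemma (necessity, Gaussians and duality): if the Weyl product satisfies the
unweighted modulation space bound, then `1 ≤ 1/p₀ + 1/p₁ + 1/p₂` and
`1 ≤ 1/q_j + 1/q_k` for all `j ≠ k`. -/
theorem weyl_product_necessary_holder_conditions
    (d : ℕ) (hd : 1 ≤ d)
    (p q pc qc : Fin 3 → ℝ≥0∞)
    (hp : ∀ j, 1 ≤ p j) (hq : ∀ j, 1 ≤ q j)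
    (hpc : ∀ j, (p j)⁻¹ + (pc j)⁻¹ = 1) (hqc : ∀ j, (q j)⁻¹ + (qc j)⁻¹ = 1)
    (Φ : SchwartzMap (PhS d) ℂ) (hΦ : Φ ≠ 0)
    (C : ℝ) (hC : 0 < C)
    (hbound : ∀ a b : SchwartzMap (PhS d) ℂ,
      modNorm d (pc 0) (qc 0) (fun _ => 1) (⇑Φ) (weylProd d (⇑a) (⇑b)) ≤
        ENNReal.ofReal C * modNorm d (p 1) (q 1) (fun _ => 1) (⇑Φ) (⇑a) *
          modNorm d (p 2) (q 2) (fun _ => 1) (⇑Φ) (⇑b)) :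
    1 ≤ rcp (p 0) + rcp (p 1) + rcp (p 2) ∧
      ∀ j k : Fin 3, j ≠ k → 1 ≤ rcp (q j) + rcp (q k) := by
  obtain ⟨hP, eP⟩ := wl_conj _ _ (hpc 0)
  obtain ⟨hQ, eQ⟩ := wl_conj _ _ (hqc 0)
  have hA := wl_test_p hd Φ hΦ C _ _ _ _ _ _ hP hQ (hp 1) (hq 1) (hp 2) (hq 2) hbound
  have hB := wl_test_qq hd Φ hΦ C _ _ _ _ _ _ hP hQ (hp 1) (hq 1) (hp 2) (hq 2) hbound
  obtain ⟨hE, hF⟩ := wl_test_q hd Φ hΦ C _ _ _ _ _ _ hP hQ (hp 1) (hq 1) (hp 2) (hq 2) hbound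
  refine ⟨by linarith, ?_⟩
  intro j k hjk
  have h01 : 1 ≤ rcp (q 0) + rcp (q 1) := by linarith
  have h02 : 1 ≤ rcp (q 0) + rcp (q 2) := by linarith
  fin_cases j <;> fin_cases k
  · exact absurd rfl hjk
  · exact h01
  · exact h02
  · exact (add_comm (rcp (q 0)) (rcp (q 1))) ▸ h01
  · exact absurd rfl hjk
  · exact hB
  · exact (add_comm (rcp (q 0)) (rcp (q 2))) ▸ h02
  · exact (add_comm (rcp (q 1)) (rcp (q 2))) ▸ hB
  · exact absurd rfl hjk

end
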